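/- arXiv:math/0609130 — 5 statements merged into one kernel-verified Lean document; each statement's English description precedes it below -/
import Mathlib

section
/- For positive semidefinite matrices A, B and any real r with 0 ≤ r ≤ 1, and every index j, λ_j(A^{r+1} + B^{r+1}) ≥ σ_j(A^{1+r/2} B^{r/2} + A^{r/2} B^{1+r/2}), where λ_j denotes the j-th largest eigenvalue and σ_j the j-th largest singular value. -/
open scoped ComplexOrder Matrix

/-- `eigDesc M j` : the `j`-th largest (0-indexed) real part of the eigenvalues
(roots of the characteristic polynomial, with multiplicity) of `M`. -/
noncomputable def eigDesc {m : Type*} [Fintype m] [DecidableEq m]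
    (M : Matrix m m ℂ) (j : ℕ) : ℝ :=
  ((M.charpoly.roots.map Complex.re).sort (· ≥ ·)).getD j 0

/-- `svalDesc K j` : the `j`-th largest (0-indexed) singular value of `K`. -/
noncomputable def svalDesc {m n : Type*} [Fintype m] [Fintype n] [DecidableEq n]
    (K : Matrix m n ℂ) (j : ℕ) : ℝ :=
  Real.sqrt (eigDesc (Kᴴ * K) j)

/-- Real power of a Hermitian matrix, via the functional calculus. -/
noncomputable def Matrix.IsHermitian.rpow {n : Type*} [Fintype n] [DecidableEq n]
    {A : Matrix n n ℂ} (hA : A.IsHermitian) (r : ℝ) : Matrix n n ℂ :=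
  hA.cfc (fun x => x ^ r)

section CStar
open Set Real MeasureTheory
open scoped NNReal

variable {𝒜 : Type*} [CStarAlgebra 𝒜] [PartialOrder 𝒜] [StarOrderedRing 𝒜]

lemma aux_convexOn_integrand {p t : ℝ} (hp : p ∈ Ioo 1 2) (ht : 0 < t) :
    ConvexOn ℝ (Ici (0 : 𝒜)) (cfcₙ (rpowIntegrand₁₂ p t)) := by
  have h₁ : (Ici (0 : 𝒜)).EqOn (cfcₙ (rpowIntegrand₁₂ p t))
      (fun x : 𝒜 =>
        (t ^ (p - 1) * t⁻¹) • x + (t ^ (p - 1) * t) • Ring.inverse (algebraMap ℝ 𝒜 t + x)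
          + - algebraMap ℝ 𝒜 (t ^ (p - 1))) := by
    intro x hx
    have hx0 : 0 ≤ x := hx
    have hsp : ∀ r ∈ spectrum ℝ x, 0 ≤ r := fun r hr => spectrum_nonneg_of_nonneg hx0 hr
    have hspectrum :  ∀ r ∈ spectrum ℝ x, t + r ≠ 0 := by
      intro r hr; have := hsp r hr; positivity
    have hg : ContinuousOn (fun z : ℝ => (t + z)⁻¹) (spectrum ℝ x) := by
      refine ContinuousOn.inv₀ (by fun_prop) hspectrum
    have hq : ∀ r ∈ quasispectrum ℝ x, t + r ≠ 0 := by
      intro r hr; have := quasispectrum_nonneg_of_nonneg x hx0 r hr; positivity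
    have hc : ContinuousOn (rpowIntegrand₁₂ p t) (quasispectrum ℝ x) := by
      unfold rpowIntegrand₁₂
      have : ContinuousOn (fun z : ℝ => (t + z)⁻¹) (quasispectrum ℝ x) :=
        ContinuousOn.inv₀ (by fun_prop) hq
      fun_prop
    rw [cfcₙ_eq_cfc (hf := hc) (hf0 := rpowIntegrand₁₂_zero ht)]
    have he : rpowIntegrand₁₂ p t = fun z : ℝ => (t ^ (p-1) * t⁻¹) * z
        + (t^(p-1) * t) * (t + z)⁻¹ + (- (t ^ (p-1))) := by
      ext z; unfold rpowIntegrand₁₂; ring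
    have c1 : ContinuousOn (fun z : ℝ => (t ^ (p-1) * t⁻¹) * z) (spectrum ℝ x) := by fun_prop
    have c2 : ContinuousOn (fun z : ℝ => (t ^ (p-1) * t) * (t + z)⁻¹) (spectrum ℝ x) :=
      continuousOn_const.mul hg
    have c3 : ContinuousOn (fun z : ℝ => t + z) (spectrum ℝ x) := by fun_prop
    have c4 : ContinuousOn (fun z : ℝ => z) (spectrum ℝ x) := by fun_prop
    have hsa : IsSelfAdjoint x := hx0.isSelfAdjoint
    rw [he, cfc_add_const _ (fun z : ℝ => (t ^ (p-1) * t⁻¹) * z + (t^(p-1) * t) * (t + z)⁻¹) _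
      (c1.add c2) hsa, cfc_add (a := x) _ _ c1 c2,
      cfc_const_mul _ _ x c4, cfc_const_mul _ _ x hg, cfc_inv _ x hspectrum c3 hsa,
      cfc_const_add _ _ x c4 hsa, cfc_id' ℝ x hsa, map_neg]
  refine ConvexOn.congr ?_ h₁.symm
  refine ConvexOn.add (ConvexOn.add ?_ ?_) (convexOn_const _ (convex_Ici 0))
  · exact ConvexOn.smul (by positivity) (convexOn_id (convex_Ici 0))
  · exact ConvexOn.smul (by positivity) <| CStarAlgebra.convexOn_ringInverse_algebraMap_add ht

lemma aux_convexOn_Ioo {p : ℝ≥0} (hp : p ∈ Ioo 1 2) :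
    ConvexOn ℝ (Ici (0 : 𝒜)) (fun a : 𝒜 => a ^ p) := by
  obtain ⟨μ, hμ⟩ := CFC.exists_measure_nnrpow_eq_integral_cfcₙ_rpowIntegrand₁₂ 𝒜 hp
  have h₃' : (Ici 0).EqOn (fun a : 𝒜 => a ^ p)
      (fun a : 𝒜 => ∫ t in Ioi 0, cfcₙ (rpowIntegrand₁₂ p t) a ∂μ) :=
    fun a ha => (hμ a ha).2
  refine ConvexOn.congr ?_ h₃'.symm
  refine integral_convexOn_of_integrand_ae (convex_Ici _) ?_ fun a ha => (hμ a ha).1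
  filter_upwards [ae_restrict_mem measurableSet_Ioi] with t ht
  exact aux_convexOn_integrand (by exact_mod_cast hp) ht

lemma aux_mid_convex {r : ℝ} (hr0 : 0 ≤ r) (hr1 : r ≤ 1) {a b : 𝒜} (ha : 0 ≤ a) (hb : 0 ≤ b) :
    ((1/2 : ℝ) • a + (1/2 : ℝ) • b) ^ (r + 1) ≤ (1/2 : ℝ) • a ^ (r + 1) + (1/2 : ℝ) • b ^ (r+1) := by
  have hc : 0 ≤ (1/2 : ℝ) • a + (1/2 : ℝ) • b := by positivity
  rcases hr0.eq_or_lt with h | h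
  · subst h
    simp only [zero_add]
    rw [CFC.rpow_one _ hc, CFC.rpow_one _ ha, CFC.rpow_one _ hb]
  rcases hr1.eq_or_lt with h1 | h1
  · subst h1
    have h2 : (1 + 1 : ℝ) = ((2 : ℕ) : ℝ) := by norm_num
    rw [h2, CFC.rpow_natCast _ _ hc, CFC.rpow_natCast _ _ ha, CFC.rpow_natCast _ _ hb]
    have hsa : star (a - b) = a - b := by
      rw [star_sub, ha.isSelfAdjoint.star_eq, hb.isSelfAdjoint.star_eq]
    have h3 : 0 ≤ (1/4 : ℝ) • (star (a - b) * (a - b)) :=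
      smul_nonneg (by norm_num) (star_mul_self_nonneg _)
    rw [hsa] at h3
    rw [← sub_nonneg]
    convert h3 using 1
    simp only [pow_two, add_mul, mul_add, sub_mul, mul_sub, smul_mul_smul_comm]
    module
  · let q : ℝ≥0 := ⟨r + 1, by linarith⟩
    have hq : q ∈ Ioo 1 2 := by
      constructor
      · exact NNReal.coe_lt_coe.1 (by change (1:ℝ) < r + 1; linarith)
      · exact NNReal.coe_lt_coe.1 (by change r + 1 < (2:ℝ); linarith)
    have := (aux_convexOn_Ioo (𝒜 := 𝒜) hq).2 ha hb
      (show (0:ℝ) ≤ 1/2 by norm_num) (show (0:ℝ) ≤ 1/2 by norm_num) (by norm_num)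
    have hq0 : 0 < q := lt_trans zero_lt_one hq.1
    simp only [CFC.nnrpow_eq_rpow hq0] at this
    exact this

lemma aux_rpow_succ {r : ℝ} (hr0 : 0 ≤ r) {c : 𝒜} (hc : 0 ≤ c) :
    c ^ (1/2 : ℝ) * c ^ r * c ^ (1/2:ℝ) = c ^ (r + 1) := by
  have h1 : ∀ s : ℝ, 0 ≤ s → ContinuousOn (fun x : ℝ≥0 => x ^ s) (spectrum ℝ≥0 c) := fun s hs =>
    (NNReal.continuous_rpow_const hs).continuousOn
  simp only [CFC.rpow_def]
  rw [← cfc_mul _ _ _ (h1 _ (by norm_num)) (h1 _ hr0),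
    ← cfc_mul (fun x : ℝ≥0 => x ^ (1/2:ℝ) * x ^ r) _ _
      ((h1 _ (by norm_num)).mul (h1 _ hr0)) (h1 _ (by norm_num))]
  congr 1
  ext x : 1
  rw [← NNReal.rpow_add_of_nonneg _ (by norm_num) hr0,
    ← NNReal.rpow_add_of_nonneg _ (by positivity) (by norm_num)]
  congr 1; ring

lemma aux_key {r : ℝ} (hr0 : 0 ≤ r) (hr1 : r ≤ 1) {a b : 𝒜} (ha : 0 ≤ a) (hb : 0 ≤ b) :
    ∃ s : 𝒜, star s = s ∧ (2:ℝ) • (s * s) = a + b ∧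
      s * (a ^ r + b ^ r) * s ≤ a ^ (r + 1) + b ^ (r + 1) := by
  set c : 𝒜 := (1/2 : ℝ) • a + (1/2 : ℝ) • b with hcdef
  have hc : 0 ≤ c := by positivity
  have hs : star (c ^ (1/2:ℝ)) = c ^ (1/2:ℝ) :=
    (CFC.rpow_nonneg (a := c)).isSelfAdjoint.star_eq
  refine ⟨c ^ (1/2 : ℝ), hs, ?_, ?_⟩
  · have := aux_rpow_succ (r := 0) le_rfl hc
    rw [CFC.rpow_zero _ hc, mul_one, zero_add, CFC.rpow_one _ hc] at this
    rw [this, hcdef]; module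
  · have h1 := aux_mid_convex hr0 hr1 ha hb
    have h2 := (CFC.concaveOn_rpow (A := 𝒜) (p := r) ⟨hr0, hr1⟩).2 ha hb
      (show (0:ℝ) ≤ 1/2 by norm_num) (show (0:ℝ) ≤ 1/2 by norm_num) (by norm_num)
    simp only [← hcdef] at h1 h2
    have h3 := star_left_conjugate_le_conjugate h2 (c ^ (1/2:ℝ))
    rw [hs, aux_rpow_succ hr0 hc] at h3
    have h4 := smul_le_smul_of_nonneg_left (h3.trans h1) (show (0:ℝ) ≤ 2 by norm_num)
    convert h4 using 1
    · simp only [mul_add, add_mul, mul_smul_comm, smul_mul_assoc]; module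
    · module
end CStar

section MatPart

local notation "TT" => Matrix.toEuclideanCLM (𝕜 := ℂ)

lemma aux_basis {n : ℕ} {H : Matrix (Fin n) (Fin n) ℂ} (hH : H.IsHermitian) :
    ∃ (b : OrthonormalBasis (Fin n) ℂ (EuclideanSpace ℂ (Fin n))) (ev : Fin n → ℝ),
      Antitone ev ∧ (∀ i, TT H (b i) = (ev i : ℂ) • b i) ∧
      ∀ j (hj : j < n), eigDesc H j = ev ⟨j, hj⟩ := by
  let e : Fin (Fintype.card (Fin n)) ≃ Fin n := Fintype.equivOfCardEq (Fintype.card_fin _)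
  let f : Fin n ≃o Fin (Fintype.card (Fin n)) := Fin.castOrderIso (Fintype.card_fin n).symm
  refine ⟨hH.eigenvectorBasis.reindex (f.toEquiv.trans e).symm, hH.eigenvalues₀ ∘ f, ?_, ?_, ?_⟩
  · exact hH.eigenvalues₀_antitone.comp_monotone f.monotone
  · intro i
    rw [OrthonormalBasis.reindex_apply, Equiv.symm_symm]
    set k := (f.toEquiv.trans e) i with hk
    have h1 : (hH.eigenvalues₀ ∘ f) i = hH.eigenvalues k := by
      have : e.symm k = f i := by simp [hk]
      simp only [Matrix.IsHermitian.eigenvalues, Function.comp]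
      exact congrArg _ this.symm
    rw [h1]
    have h2 := hH.mulVec_eigenvectorBasis k
    ext m
    have h3 := congrFun h2 m
    simpa using h3
  · intro j hj
    unfold eigDesc
    have := hH.sort_roots_charpoly_eq_eigenvalues₀
    have h2 : (RCLike.re : ℂ → ℝ) = Complex.re := by ext; rfl
    have h3 : (Multiset.map Complex.re H.charpoly.roots).sort (· ≥ ·)
      = List.ofFn hH.eigenvalues₀ := this
    rw [h3, List.getD_eq_getElem _ _ (by simpa using hj)]
    simp [f]

lemma aux_inner_eig {n : ℕ} {H : Matrix (Fin n) (Fin n) ℂ}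
    (c : OrthonormalBasis (Fin n) ℂ (EuclideanSpace ℂ (Fin n))) (μ : Fin n → ℝ)
    (hc : ∀ i, TT H (c i) = (μ i : ℂ) • c i) (z : EuclideanSpace ℂ (Fin n)) :
    (inner ℂ (TT H z) z).re = ∑ i, μ i * ‖inner ℂ (c i) z‖ ^ 2 := by
  have h1 : TT H z = ∑ i, inner ℂ (c i) z • (μ i : ℂ) • c i := by
    conv_lhs => rw [← c.sum_repr' z]
    simp [map_sum, hc]
  rw [h1, sum_inner, Complex.re_sum]
  refine Finset.sum_congr rfl fun i _ => ?_
  rw [inner_smul_left, inner_smul_left, Complex.conj_ofReal, mul_left_comm,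
    Complex.re_ofReal_mul, ← Complex.normSq_eq_conj_mul_self, Complex.ofReal_re,
    Complex.normSq_eq_norm_sq]

lemma aux_kernel {n j : ℕ} (Z : EuclideanSpace ℂ (Fin (j+1)) →ₗ[ℂ] EuclideanSpace ℂ (Fin n))
    (w : Fin j → EuclideanSpace ℂ (Fin n)) :
    ∃ a : EuclideanSpace ℂ (Fin (j+1)), a ≠ 0 ∧ ∀ k, inner ℂ (w k) (Z a) = 0 := by
  let G : EuclideanSpace ℂ (Fin (j+1)) →ₗ[ℂ] (Fin j → ℂ) :=
    LinearMap.pi fun k => (innerSL ℂ (w k)).toLinearMap ∘ₗ Z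
  have hk : LinearMap.ker G ≠ ⊥ := LinearMap.ker_ne_bot_of_finrank_lt (by simp)
  obtain ⟨a, ha, ha0⟩ := (Submodule.ne_bot_iff _).1 hk
  refine ⟨a, ha0, fun k => ?_⟩
  have := congrFun (LinearMap.mem_ker.1 ha) k
  simpa [G] using this

lemma aux_adj {n : ℕ} (P : Matrix (Fin n) (Fin n) ℂ) (x y : EuclideanSpace ℂ (Fin n)) :
    inner ℂ (TT Pᴴ x) y = inner ℂ x (TT P y) := by
  have : TT Pᴴ = ContinuousLinearMap.adjoint (TT P) := by
    rw [← Matrix.star_eq_conjTranspose, map_star]; rfl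
  rw [this, ContinuousLinearMap.adjoint_inner_left]

lemma aux_norm_sum {n m : ℕ} {v : Fin m → EuclideanSpace ℂ (Fin n)} (hv : Orthonormal ℂ v)
    (a : Fin m → ℂ) : ‖∑ i, a i • v i‖ ^ 2 = ∑ i, ‖a i‖ ^ 2 := by
  have h := hv.inner_sum a a Finset.univ
  have h2 := inner_self_eq_norm_sq (𝕜 := ℂ) (∑ i, a i • v i)
  rw [h] at h2
  rw [← h2, map_sum]
  refine Finset.sum_congr rfl fun i _ => ?_
  rw [← Complex.normSq_eq_conj_mul_self, ← Complex.normSq_eq_norm_sq]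
  simp

lemma aux_main {n : ℕ} {P Q H K : Matrix (Fin n) (Fin n) ℂ}
    (hH : H.IsHermitian) (hK : K = (2:ℂ) • (Pᴴ * Q))
    (hle : (H - (P * Pᴴ + Q * Qᴴ)).PosSemidef) (j : ℕ) (hj : j < n) :
    svalDesc K j ≤ eigDesc H j := by
  obtain ⟨c, μ, hμ, hc, hce⟩ := aux_basis hH
  obtain ⟨b, ev, hev, hb, hbe⟩ := aux_basis (Matrix.isHermitian_conjTranspose_mul_self K)
  unfold svalDesc
  rw [hce j hj, hbe j hj]
  have hquad : ∀ z, ‖TT Pᴴ z‖ ^ 2 + ‖TT Qᴴ z‖ ^ 2 ≤ (inner ℂ (TT H z) z).re := by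
    intro z
    have h0 : 0 ≤ (inner ℂ (TT (H - (P * Pᴴ + Q * Qᴴ)) z) z).re := by
      have := hle.re_dotProduct_nonneg (WithLp.ofLp z)
      rw [← inner_conj_symm, Complex.conj_re, EuclideanSpace.inner_eq_star_dotProduct,
        dotProduct_comm, Matrix.ofLp_toEuclideanCLM]
      exact this
    have h1 : ∀ M : Matrix (Fin n) (Fin n) ℂ,
        (inner ℂ (TT (M * Mᴴ) z) z).re = ‖TT Mᴴ z‖ ^ 2 := by
      intro M
      rw [map_mul, mul_apply_eq_comp, ← Matrix.conjTranspose_conjTranspose M, aux_adj,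
        Matrix.conjTranspose_conjTranspose]
      exact inner_self_eq_norm_sq (𝕜 := ℂ) _
    rw [map_sub, map_add, sub_apply, add_apply,
      inner_sub_left, inner_add_left, Complex.sub_re, Complex.add_re, h1, h1] at h0
    linarith
  by_cases hs0 : ev ⟨j, hj⟩ ≤ 0
  · rw [Real.sqrt_eq_zero_of_nonpos hs0]
    have := hquad (c ⟨j, hj⟩)
    rw [hc, inner_smul_left, Complex.conj_ofReal, Complex.re_ofReal_mul] at this
    have h1 : (inner ℂ (c ⟨j, hj⟩) (c ⟨j, hj⟩)).re = 1 := by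
      have := inner_self_eq_norm_sq (𝕜 := ℂ) (c ⟨j, hj⟩)
      simpa using this
    rw [h1] at this
    nlinarith [sq_nonneg ‖TT Pᴴ (c ⟨j, hj⟩)‖, sq_nonneg ‖TT Qᴴ (c ⟨j, hj⟩)‖]
  push Not at hs0
  let ι : Fin (j+1) → Fin n := Fin.castLE hj
  let s : Fin (j+1) → ℝ := fun i => √(ev (ι i))
  have hle' : ∀ i, ev ⟨j, hj⟩ ≤ ev (ι i) := fun i => hev (Fin.le_def.2 (Nat.lt_succ_iff.1 i.2))
  have hspos : ∀ i, 0 < s i := fun i => Real.sqrt_pos.2 (hs0.trans_le (hle' i))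
  have hss : ∀ i, s i * s i = ev (ι i) := fun i => Real.mul_self_sqrt (hs0.le.trans (hle' i))
  set σ := √(ev ⟨j, hj⟩) with hσ
  have hσs : ∀ i, σ ≤ s i := fun i => Real.sqrt_le_sqrt (hle' i)
  have hσ0 : 0 < σ := Real.sqrt_pos.2 hs0
  have hιinj : Function.Injective ι := Fin.castLE_injective _
  let v : Fin (j+1) → EuclideanSpace ℂ (Fin n) := fun i => b (ι i)
  have hv : Orthonormal ℂ v := b.orthonormal.comp ι hιinj
  let u : Fin (j+1) → EuclideanSpace ℂ (Fin n) := fun i => ((s i)⁻¹ : ℂ) • TT K (v i)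
  have hKK : ∀ i k, inner ℂ (TT K (v i)) (TT K (v k)) = (ev (ι k) : ℂ) * inner ℂ (v i) (v k) := by
    intro i k
    conv_lhs => rw [← Matrix.conjTranspose_conjTranspose K]
    rw [Matrix.conjTranspose_conjTranspose, ← inner_conj_symm, ← aux_adj,
      ← mul_apply_eq_comp, ← map_mul, hb, inner_smul_left, map_mul, inner_conj_symm,
      Complex.conj_ofReal, Complex.conj_ofReal]
  have hu : Orthonormal ℂ u := by
    rw [orthonormal_iff_ite] at hv ⊢
    intro i k
    simp only [u, inner_smul_left, inner_smul_right, hKK, hv]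
    split_ifs with h
    · subst h
      rw [← hss]
      have := (hspos i).ne'
      have : (s i : ℂ) ≠ 0 := by exact_mod_cast this
      simp
      field_simp
    · simp
  have hKv : ∀ i, TT K (v i) = (s i : ℂ) • u i := by
    intro i
    have : (s i : ℂ) ≠ 0 := by exact_mod_cast (hspos i).ne'
    simp [u, smul_smul, this]
  let X : EuclideanSpace ℂ (Fin (j+1)) →ₗ[ℂ] EuclideanSpace ℂ (Fin n) :=
    (Fintype.linearCombination ℂ v) ∘ₗ (WithLp.linearEquiv 2 ℂ (Fin (j+1) → ℂ)).toLinearMap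
  let Y : EuclideanSpace ℂ (Fin (j+1)) →ₗ[ℂ] EuclideanSpace ℂ (Fin n) :=
    (Fintype.linearCombination ℂ u) ∘ₗ (WithLp.linearEquiv 2 ℂ (Fin (j+1) → ℂ)).toLinearMap
  obtain ⟨a, ha0, ha⟩ := aux_kernel ((TT P).toLinearMap ∘ₗ Y + (TT Q).toLinearMap ∘ₗ X)
    (fun k : Fin j => c (Fin.castLE hj.le k))
  have hX : X a = ∑ i, a i • v i := by simp [X, Fintype.linearCombination_apply]
  have hY : Y a = ∑ i, a i • u i := by simp [Y, Fintype.linearCombination_apply]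
  set x := X a with hxdef
  set y := Y a with hydef
  set z := TT P y + TT Q x with hz
  have ha' : ∀ k : Fin j, inner ℂ (c (Fin.castLE hj.le k)) z = 0 := ha
  set N := ∑ i, ‖a i‖ ^ 2 with hN
  have hNpos : 0 < N := by
    have : ‖a‖ ^ 2 = N := EuclideanSpace.norm_sq_eq a
    rw [← this]; have := norm_pos_iff.2 ha0; positivity
  have hxN : ‖x‖ ^ 2 = N := by rw [hX]; exact aux_norm_sum hv _
  have hyN : ‖y‖ ^ 2 = N := by rw [hY]; exact aux_norm_sum hu _
  have hKx : TT K x = ∑ i, (a i * s i) • u i := by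
    rw [hX, map_sum]; simp only [map_smul, hKv, smul_smul]
  have hyK : σ * N ≤ (inner ℂ y (TT K x)).re := by
    rw [hKx, hY, hu.inner_sum, Complex.re_sum, hN, Finset.mul_sum]
    refine Finset.sum_le_sum fun i _ => ?_
    rw [← mul_assoc, ← Complex.normSq_eq_conj_mul_self, ← Complex.ofReal_mul, Complex.ofReal_re,
      Complex.normSq_eq_norm_sq, mul_comm]
    exact mul_le_mul_of_nonneg_left (hσs i) (by positivity)
  have hPQ : (inner ℂ y (TT K x)).re = 2 * (inner ℂ (TT P y) (TT Q x)).re := by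
    rw [hK, map_smul, smul_apply, inner_smul_right, map_mul,
      mul_apply_eq_comp, ← aux_adj, Matrix.conjTranspose_conjTranspose]
    simp
  have hz1 : 2 * σ * N ≤ ‖z‖ ^ 2 := by
    have e1 := norm_add_sq (𝕜 := ℂ) (TT P y) (TT Q x)
    have e2 := norm_sub_sq (𝕜 := ℂ) (TT P y) (TT Q x)
    have e3 : RCLike.re (inner ℂ (TT P y) (TT Q x)) = (inner ℂ (TT P y) (TT Q x)).re := rfl
    rw [e3] at e1 e2
    rw [hz]
    nlinarith [sq_nonneg ‖TT P y - TT Q x‖]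
  have hz2 : ‖z‖ ^ 2 ≤ ‖TT Pᴴ z‖ * ‖y‖ + ‖TT Qᴴ z‖ * ‖x‖ := by
    have e1 : ‖z‖ ^ 2 = (inner ℂ z z).re := (inner_self_eq_norm_sq (𝕜 := ℂ) z).symm
    have e2 : inner ℂ z z = inner ℂ (TT Pᴴ z) y + inner ℂ (TT Qᴴ z) x := by
      rw [aux_adj, aux_adj, ← inner_add_right]
    rw [e1, e2, Complex.add_re]
    exact add_le_add (re_inner_le_norm (𝕜 := ℂ) _ _) (re_inner_le_norm (𝕜 := ℂ) _ _)
  have hz3 : (inner ℂ (TT H z) z).re ≤ μ ⟨j, hj⟩ * ‖z‖ ^ 2 := by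
    rw [aux_inner_eig c μ hc, ← c.sum_sq_norm_inner_right z, Finset.mul_sum]
    refine Finset.sum_le_sum fun i _ => ?_
    by_cases hi : i.1 < j
    · have : inner ℂ (c i) z = 0 := ha' ⟨i.1, hi⟩
      simp [this]
    · exact mul_le_mul_of_nonneg_right (hμ (Fin.le_def.2 (not_lt.1 hi))) (by positivity)
  have hz4 := hquad z
  have hzpos : 0 < ‖z‖ ^ 2 := lt_of_lt_of_le (by positivity) hz1
  set p := ‖TT Pᴴ z‖
  set q := ‖TT Qᴴ z‖
  have h5 : (‖z‖ ^ 2) ^ 2 ≤ 2 * N * (p ^ 2 + q ^ 2) := by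
    have : (‖z‖ ^ 2) ^ 2 ≤ (p * ‖y‖ + q * ‖x‖) ^ 2 := by gcongr
    have e : (p * ‖y‖ + q * ‖x‖) ^ 2 ≤ 2 * (p ^ 2 * ‖y‖ ^ 2 + q ^ 2 * ‖x‖ ^ 2) := by
      nlinarith [sq_nonneg (p * ‖y‖ - q * ‖x‖)]
    rw [hxN, hyN] at e
    linarith
  have h6 : (‖z‖ ^ 2) * ‖z‖ ^ 2 ≤ (2 * N * μ ⟨j, hj⟩) * ‖z‖ ^ 2 := by
    have : 2 * N * (p ^ 2 + q ^ 2) ≤ 2 * N * (μ ⟨j, hj⟩ * ‖z‖ ^ 2) := by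
      gcongr; linarith
    nlinarith
  have h7 := le_of_mul_le_mul_right h6 hzpos
  have h8 : N * σ ≤ N * μ ⟨j, hj⟩ := by linarith
  exact le_of_mul_le_mul_left h8 hNpos

end MatPart

section Final
open scoped MatrixOrder Matrix.Norms.L2Operator
open scoped NNReal

lemma aux_rpow_eq {n : ℕ} {A : Matrix (Fin n) (Fin n) ℂ} (hA : A.PosSemidef) (s : ℝ) :
    hA.1.rpow s = A ^ s := by
  have h0 : 0 ≤ A := Matrix.nonneg_iff_posSemidef.2 hA
  rw [Matrix.IsHermitian.rpow, ← Matrix.IsHermitian.cfc_eq, CFC.rpow_eq_cfc_real (ha := h0)]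

lemma aux_rpow_mul {n : ℕ} {A : Matrix (Fin n) (Fin n) ℂ} (hA : A.PosSemidef) {s t : ℝ}
    (hs : 0 ≤ s) (ht : 0 ≤ t) :
    A ^ s * A ^ t = A ^ (s + t) := by
  have h1 : ∀ s : ℝ, 0 ≤ s → ContinuousOn (fun x : ℝ≥0 => x ^ s) (spectrum ℝ≥0 A) := fun s hs =>
    (NNReal.continuous_rpow_const hs).continuousOn
  simp only [CFC.rpow_def]
  rw [← cfc_mul _ _ _ (h1 _ hs) (h1 _ ht)]
  congr 1
  ext x : 1
  rw [← NNReal.rpow_add_of_nonneg _ hs ht]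

lemma aux_final {n : ℕ} {A B : Matrix (Fin n) (Fin n) ℂ}
    (hA : A.PosSemidef) (hB : B.PosSemidef) (r : ℝ) (hr0 : 0 ≤ r) (hr1 : r ≤ 1)
    (j : ℕ) (hj : j < n) :
    svalDesc (hA.1.rpow (1 + r / 2) * hB.1.rpow (r / 2)
        + hA.1.rpow (r / 2) * hB.1.rpow (1 + r / 2)) j
      ≤ eigDesc (hA.1.rpow (r + 1) + hB.1.rpow (r + 1)) j := by
  have hA0 : 0 ≤ A := Matrix.nonneg_iff_posSemidef.2 hA
  have hB0 : 0 ≤ B := Matrix.nonneg_iff_posSemidef.2 hB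
  have eA := aux_rpow_eq hA
  have eB := aux_rpow_eq hB
  rw [eA, eA, eA, eB, eB, eB]
  obtain ⟨s, hs, hss, hle⟩ := aux_key hr0 hr1 hA0 hB0
  have hsa : ∀ (M : Matrix (Fin n) (Fin n) ℂ) (t : ℝ), (M ^ t)ᴴ = M ^ t := fun M t =>
    (CFC.rpow_nonneg (a := M) (y := t)).isSelfAdjoint.star_eq
  have hs' : sᴴ = s := hs
  have hr2 : 0 ≤ r / 2 := by positivity
  refine aux_main (P := s * A ^ (r/2)) (Q := s * B ^ (r/2)) ?_ ?_ ?_ j hj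
  · rw [Matrix.IsHermitian, Matrix.conjTranspose_add, hsa, hsa]
  · rw [Matrix.conjTranspose_mul, hsa, hs']
    have e1 : (2:ℂ) • (A ^ (r/2) * s * (s * B ^ (r/2)))
        = A ^ (r/2) * ((2:ℝ) • (s * s)) * B ^ (r/2) := by
      rw [mul_smul_comm, smul_mul_assoc, ← Complex.coe_smul]
      simp only [mul_assoc, Complex.ofReal_ofNat]
    have hA1 : A ^ (r/2) * A = A ^ (1 + r/2) := by
      nth_rw 2 [← CFC.rpow_one A hA0]
      rw [aux_rpow_mul hA hr2 zero_le_one, add_comm]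
    have hB1 : B * B ^ (r/2) = B ^ (1 + r/2) := by
      nth_rw 1 [← CFC.rpow_one B hB0]
      rw [aux_rpow_mul hB zero_le_one hr2]
    rw [e1, hss, mul_add, add_mul, hA1, mul_assoc _ B, hB1]
  · rw [← Matrix.le_iff]
    convert hle using 1
    rw [Matrix.conjTranspose_mul, Matrix.conjTranspose_mul, hsa, hsa, hs']
    have hA2 := aux_rpow_mul hA hr2 hr2
    have hB2 := aux_rpow_mul hB hr2 hr2
    rw [add_halves] at hA2 hB2
    rw [← hA2, ← hB2]
    noncomm_ring
end Final

theorem eig_rpow_sum_ge_sval {n : ℕ} {A B : Matrix (Fin n) (Fin n) ℂ}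
    (hA : A.PosSemidef) (hB : B.PosSemidef) (r : ℝ) (hr0 : 0 ≤ r) (hr1 : r ≤ 1)
    (j : ℕ) (hj : j < n) :
    svalDesc (hA.1.rpow (1 + r / 2) * hB.1.rpow (r / 2)
        + hA.1.rpow (r / 2) * hB.1.rpow (1 + r / 2)) j
      ≤ eigDesc (hA.1.rpow (r + 1) + hB.1.rpow (r + 1)) j := by
  exact aux_final hA hB r hr0 hr1 j hj
end

section
/- For n×n positive semidefinite complex matrices A and B, every index j with 1 ≤ j ≤ n, and every real s with 0 ≤ s ≤ 1, the j-th largest singular value satisfies σ_j(A^s B^{1-s} + A^{1-s} B^s) ≤ σ_j(A + B). -/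
open scoped ComplexOrder Matrix

section OpIneq
open Set MeasureTheory
open scoped NNReal
variable {A : Type*} [CStarAlgebra A] [PartialOrder A] [StarOrderedRing A]

lemma zh_convexOn_integrand {p t : ℝ} (ht : 0 < t) :
    ConvexOn ℝ (Ici (0 : A)) (cfc (Real.rpowIntegrand₁₂ p t)) := by
  have h₁ : (Ici (0 : A)).EqOn (cfc (Real.rpowIntegrand₁₂ p t))
      (fun x : A => t ^ (p - 1) • ((t⁻¹ • x + t • Ring.inverse (algebraMap ℝ A t + x))
        - algebraMap ℝ A 1)) := by
    intro x hx
    have hx0 : (0 : A) ≤ x := hx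
    have hspectrum :  ∀ r ∈ spectrum ℝ x, t + r ≠ 0 := by grind
    have hg : ContinuousOn (fun z : ℝ => (t + z)⁻¹) (spectrum ℝ x) := by
      fun_prop (disch := grind -abstractProof)
    have hf : ContinuousOn (fun z : ℝ => t⁻¹ * z) (spectrum ℝ x) := by fun_prop
    have hg' : ContinuousOn (fun z : ℝ => t * (t + z)⁻¹) (spectrum ℝ x) := by fun_prop
    have c1 : cfc (fun z : ℝ => (t + z)⁻¹) x = Ring.inverse (algebraMap ℝ A t + x) := by
      rw [cfc_inv _ _ hspectrum .., cfc_const_add .., cfc_id' ..]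
    have c2 : cfc (fun z : ℝ => t⁻¹ * z) x = t⁻¹ • x := by
      rw [cfc_const_mul .., cfc_id' ..]
    have c3 : cfc (fun z : ℝ => t * (t + z)⁻¹) x = t • Ring.inverse (algebraMap ℝ A t + x) := by
      rw [cfc_const_mul _ _ _ hg, c1]
    have c4 : cfc (fun z : ℝ => t⁻¹ * z + t * (t + z)⁻¹) x
        = t⁻¹ • x + t • Ring.inverse (algebraMap ℝ A t + x) := by
      rw [cfc_add (a := x) _ _ hf hg', c2, c3]
    have c5 : cfc (fun z : ℝ => t⁻¹ * z + t * (t + z)⁻¹ - 1) x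
        = t⁻¹ • x + t • Ring.inverse (algebraMap ℝ A t + x) - algebraMap ℝ A 1 := by
      rw [cfc_sub (fun z : ℝ => t⁻¹ * z + t * (t + z)⁻¹) (fun _ => 1) x (hf.add hg')
        continuousOn_const, c4, cfc_const ..]
    have c6 : cfc (fun z : ℝ => t ^ (p - 1) * (t⁻¹ * z + t * (t + z)⁻¹ - 1)) x
        = t ^ (p - 1) • (t⁻¹ • x + t • Ring.inverse (algebraMap ℝ A t + x) - algebraMap ℝ A 1) := by
      rw [cfc_const_mul _ (fun z : ℝ => t⁻¹ * z + t * (t + z)⁻¹ - 1) x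
        ((hf.add hg').sub continuousOn_const), c5]
    exact c6
  refine ConvexOn.congr ?_ h₁.symm
  refine ConvexOn.smul (by positivity) ?_
  refine ConvexOn.sub ?_ (concaveOn_const _ (convex_Ici 0))
  refine ConvexOn.add (ConvexOn.smul (by positivity) (convexOn_id (convex_Ici 0))) ?_
  exact ConvexOn.smul (by positivity) <| CStarAlgebra.convexOn_ringInverse_algebraMap_add ht

lemma zh_convexOn_nnrpow_Ioo {p : ℝ≥0} (hp : p ∈ Ioo 1 2) :
    ConvexOn ℝ (Ici (0 : A)) (fun a : A => a ^ p) := by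
  obtain ⟨μ, hμ⟩ := CFC.exists_measure_nnrpow_eq_integral_cfcₙ_rpowIntegrand₁₂ A hp
  have h₃' : (Ici 0).EqOn (fun a : A => a ^ p)
      (fun a : A => ∫ t in Ioi 0, cfcₙ (Real.rpowIntegrand₁₂ p t) a ∂μ) :=
    fun a ha => (hμ a ha).2
  refine ConvexOn.congr ?_ h₃'.symm
  refine integral_convexOn_of_integrand_ae (convex_Ici _) ?_ fun a ha => (hμ a ha).1
  filter_upwards [ae_restrict_mem measurableSet_Ioi] with t ht
  have ht0 : 0 < t := ht
  refine ConvexOn.congr (zh_convexOn_integrand (p := p) ht0) ?_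
  intro x hx
  have hx0 : (0 : A) ≤ x := hx
  have hcont : ContinuousOn (Real.rpowIntegrand₁₂ p t) (quasispectrum ℝ x) := by
    have hq : ∀ z ∈ quasispectrum ℝ x, t + z ≠ 0 := by grind
    unfold Real.rpowIntegrand₁₂
    have hg : ContinuousOn (fun z : ℝ => (t + z)⁻¹) (quasispectrum ℝ x) :=
      ContinuousOn.inv₀ (by fun_prop) hq
    fun_prop
  exact (cfcₙ_eq_cfc (hf := hcont) (hf0 := Real.rpowIntegrand₁₂_zero ht0)).symm

lemma zh_midconvex {r : ℝ} (h0 : 0 ≤ r) (h1 : r ≤ 1) {a b : A} (ha : 0 ≤ a) (hb : 0 ≤ b) :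
    ((2⁻¹ : ℝ) • a + (2⁻¹ : ℝ) • b) ^ (1 + r) ≤
      (2⁻¹ : ℝ) • a ^ (1 + r) + (2⁻¹ : ℝ) • b ^ (1 + r) := by
  have hm : 0 ≤ (2⁻¹ : ℝ) • a + (2⁻¹ : ℝ) • b := by positivity
  rcases h0.eq_or_lt with rfl | h0
  · simp [CFC.rpow_one _ hm, CFC.rpow_one _ ha, CFC.rpow_one _ hb]
  rcases h1.eq_or_lt with rfl | h1
  · have e : (1 + 1 : ℝ) = ((2 : ℕ) : ℝ) := by norm_num
    rw [e, CFC.rpow_natCast _ _ hm, CFC.rpow_natCast _ _ ha, CFC.rpow_natCast _ _ hb]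
    rw [← sub_nonneg]
    have hsa : IsSelfAdjoint (a - b) := (IsSelfAdjoint.of_nonneg ha).sub (.of_nonneg hb)
    have : 0 ≤ (4⁻¹ : ℝ) • ((a - b) * (a - b)) := by
      refine smul_nonneg (by norm_num) ?_
      have := star_mul_self_nonneg (a - b)
      rwa [hsa.star_eq] at this
    convert this using 1
    simp only [pow_two, add_mul, mul_add, sub_mul, mul_sub, smul_mul_assoc, mul_smul_comm,
      smul_sub]
    norm_num
    module
  · let q : ℝ≥0 := ⟨1 + r, by positivity⟩
    have hq : 0 < q := by rw [← NNReal.coe_pos]; change 0 < 1 + r; positivity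
    have hq' : q ∈ Ioo 1 2 := by
      constructor <;> rw [← NNReal.coe_lt_coe]
      · change 1 < 1 + r; linarith
      · change 1 + r < 2; linarith
    have := (zh_convexOn_nnrpow_Ioo (A := A) hq').2 ha hb
      (show (0:ℝ) ≤ 2⁻¹ by norm_num) (show (0:ℝ) ≤ 2⁻¹ by norm_num) (by norm_num)
    simp only [CFC.nnrpow_eq_rpow hq] at this
    exact this

lemma zh_op_ineq {r : ℝ} (h0 : 0 ≤ r) (h1 : r ≤ 1) {a b : A} (ha : 0 ≤ a) (hb : 0 ≤ b) :
    (2⁻¹ : ℝ) • (CFC.sqrt (a + b) * (a ^ r + b ^ r) * CFC.sqrt (a + b)) ≤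
      a ^ (1 + r) + b ^ (1 + r) := by
  set c := (2⁻¹ : ℝ) • a + (2⁻¹ : ℝ) • b with hc
  have hm : 0 ≤ c := by positivity
  have hab : 0 ≤ a + b := by positivity
  have e2 : (2 : ℝ) • c = a + b := by rw [hc]; module
  have k1 := zh_midconvex h0 h1 ha hb
  have k2 := (CFC.concaveOn_rpow (A := A) (p := r) ⟨h0, h1⟩).2 ha hb
      (show (0:ℝ) ≤ 2⁻¹ by norm_num) (show (0:ℝ) ≤ 2⁻¹ by norm_num) (by norm_num)
  simp only at k2
  rw [← hc] at k1 k2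
  have hs : IsSelfAdjoint (CFC.sqrt (a + b)) := .of_nonneg (CFC.sqrt_nonneg _)
  have k3 := hs.conjugate_le_conjugate k2
  have k4 : CFC.sqrt (a + b) * c ^ r * CFC.sqrt (a + b) = (2 : ℝ) • c ^ (1 + r) := by
    have hcomm : Commute (CFC.sqrt (a + b)) (c ^ r) := by
      have : Commute (a + b) (c ^ r) := by
        rw [← e2]
        refine Commute.smul_left ?_ _
        rw [CFC.rpow_def]
        exact (Commute.refl c).cfc_nnreal _ |>.symm
      rw [CFC.sqrt_eq_cfc]
      exact this.cfc_nnreal _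
    rw [hcomm.eq, mul_assoc, CFC.sqrt_mul_sqrt_self _ hab, ← e2, mul_smul_comm]
    congr 1
    rw [CFC.rpow_eq_cfc_real hm, CFC.rpow_eq_cfc_real hm]
    have hcont : ContinuousOn (fun x : ℝ => x ^ r) (spectrum ℝ c) := by
      exact (Real.continuous_rpow_const h0).continuousOn
    conv_lhs => rhs; rw [← cfc_id' ℝ c]
    rw [← cfc_mul _ (fun x : ℝ => x) c hcont continuousOn_id]
    refine cfc_congr fun x hx => ?_
    have hx0 : 0 ≤ x := spectrum_nonneg_of_nonneg hm hx
    rw [Real.rpow_add_of_nonneg hx0 zero_le_one h0, Real.rpow_one, mul_comm]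
  rw [k4] at k3
  calc _ = CFC.sqrt (a + b) * ((2⁻¹ : ℝ) • a ^ r + (2⁻¹ : ℝ) • b ^ r) * CFC.sqrt (a + b) := by
        rw [← smul_add, mul_smul_comm, smul_mul_assoc]
    _ ≤ (2 : ℝ) • c ^ (1 + r) := k3
    _ ≤ (2 : ℝ) • ((2⁻¹ : ℝ) • a ^ (1 + r) + (2⁻¹ : ℝ) • b ^ (1 + r)) := by gcongr
    _ = _ := by module
end OpIneq

section Eig
open Matrix
variable {n : Type*} [Fintype n] [DecidableEq n]

lemma zh_le_eigDesc_iff {H : Matrix n n ℂ} (hH : H.IsHermitian) {j : ℕ}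
    (hj : j < Fintype.card n) (c : ℝ) :
    c ≤ eigDesc H j ↔ j < Fintype.card {i // c ≤ hH.eigenvalues i} := by
  have e1 : eigDesc H j = hH.eigenvalues₀ ⟨j, hj⟩ := by
    have h := hH.sort_roots_charpoly_eq_eigenvalues₀
    unfold eigDesc
    have h' : (H.charpoly.roots.map Complex.re).sort (· ≥ ·) = List.ofFn hH.eigenvalues₀ := h
    rw [h', List.getD_eq_getElem _ _ (by simpa using hj)]
    simp
  have e2 : Fintype.card {i // c ≤ hH.eigenvalues i} =
      Fintype.card {i // c ≤ hH.eigenvalues₀ i} := by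
    refine Fintype.card_congr ?_
    refine Equiv.subtypeEquiv (Fintype.equivOfCardEq (Fintype.card_fin _)).symm ?_
    intro a; rfl
  rw [e1, e2]
  have anti := hH.eigenvalues₀_antitone
  rw [Fintype.card_subtype]
  constructor
  · intro h
    have hsub : Finset.Iic (⟨j, hj⟩ : Fin (Fintype.card n)) ⊆
        Finset.univ.filter (fun i => c ≤ hH.eigenvalues₀ i) := by
      intro i hi
      simp only [Finset.mem_Iic] at hi
      simp only [Finset.mem_filter, Finset.mem_univ, true_and]
      exact h.trans (anti hi)
    have := Finset.card_le_card hsub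
    simp only [Fin.card_Iic] at this
    omega
  · intro h
    by_contra hc
    have hsub : Finset.univ.filter (fun i => c ≤ hH.eigenvalues₀ i) ⊆ 
        Finset.Iio (⟨j, hj⟩ : Fin (Fintype.card n)) := by
      intro i hi
      simp only [Finset.mem_filter, Finset.mem_univ, true_and] at hi
      simp only [Finset.mem_Iio]
      by_contra hji
      exact hc (hi.trans (anti (not_lt.mp hji)))
    have := Finset.card_le_card hsub
    simp only [Fin.card_Iio] at this
    omega

/-- quadratic form in eigen-coordinates -/
lemma zh_quad_cfc {H : Matrix n n ℂ} (hH : H.IsHermitian) (f : ℝ → ℝ) (x : n → ℂ) :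
    (star x ⬝ᵥ (hH.cfc f) *ᵥ x).re =
      ∑ i, f (hH.eigenvalues i) * ‖((star (hH.eigenvectorUnitary : Matrix n n ℂ)) *ᵥ x) i‖ ^ 2 := by
  set U : Matrix n n ℂ := hH.eigenvectorUnitary.1
  have e : hH.cfc f = U * diagonal (RCLike.ofReal ∘ f ∘ hH.eigenvalues) * star U := by
    simp only [IsHermitian.cfc, Unitary.conjStarAlgAut_apply]; rfl
  rw [e, ← mulVec_mulVec, ← mulVec_mulVec, dotProduct_mulVec]
  have e2 : star x ᵥ* U = star (star U *ᵥ x) := by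
    rw [star_mulVec]; simp [star_eq_conjTranspose]
  rw [e2]
  simp only [dotProduct, mulVec_diagonal, Pi.star_apply, Complex.re_sum, Function.comp]
  refine Finset.sum_congr rfl fun i _ => ?_
  set z := (star U *ᵥ x) i
  rw [← Complex.normSq_eq_norm_sq, Complex.normSq_apply]
  simp
  ring

lemma zh_quad {H : Matrix n n ℂ} (hH : H.IsHermitian) (x : n → ℂ) :
    (star x ⬝ᵥ H *ᵥ x).re =
      ∑ i, hH.eigenvalues i * ‖((star (hH.eigenvectorUnitary : Matrix n n ℂ)) *ᵥ x) i‖ ^ 2 := by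
  have h := zh_quad_cfc hH id x
  have e : hH.cfc id = H := by rw [← hH.cfc_eq, cfc_id ℝ H hH.isSelfAdjoint]
  rw [e] at h
  simpa using h

lemma zh_quad_one {H : Matrix n n ℂ} (hH : H.IsHermitian) (x : n → ℂ) :
    (star x ⬝ᵥ x).re =
      ∑ i, ‖((star (hH.eigenvectorUnitary : Matrix n n ℂ)) *ᵥ x) i‖ ^ 2 := by
  have h := zh_quad_cfc hH (fun _ => 1) x
  have e : hH.cfc (fun _ => 1) = 1 := by
    rw [← hH.cfc_eq, cfc_const_one ℝ H hH.isSelfAdjoint]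
  rw [e] at h
  simpa using h

lemma zh_minimax_lower {H : Matrix n n ℂ} (hH : H.IsHermitian) {j : ℕ}
    (hj : j < Fintype.card n) (c : ℝ) {W : Type*} [AddCommGroup W] [Module ℂ W]
    [FiniteDimensional ℂ W] (hW : j < Module.finrank ℂ W) (φ : W →ₗ[ℂ] (n → ℂ))
    (hφ : Function.Injective φ)
    (h : ∀ y, c * (star (φ y) ⬝ᵥ φ y).re ≤ (star (φ y) ⬝ᵥ H *ᵥ φ y).re) :
    c ≤ eigDesc H j := by
  rw [zh_le_eigDesc_iff hH hj]
  by_contra hcard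
  set U : Matrix n n ℂ := hH.eigenvectorUnitary.1 with hU
  let ψ : W →ₗ[ℂ] ({i // c ≤ hH.eigenvalues i} → ℂ) :=
    (LinearMap.funLeft ℂ ℂ Subtype.val) ∘ₗ (star U).mulVecLin ∘ₗ φ
  have hker : LinearMap.ker ψ ≠ ⊥ := by
    apply LinearMap.ker_ne_bot_of_finrank_lt
    rw [Module.finrank_fintype_fun_eq_card]
    omega
  obtain ⟨y, hy, hy0⟩ := (Submodule.ne_bot_iff _).mp hker
  have hz : ∀ i, c ≤ hH.eigenvalues i → (star U *ᵥ φ y) i = 0 := by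
    intro i hi
    exact congrFun (LinearMap.mem_ker.mp hy) ⟨i, hi⟩
  have h1 := h y
  rw [zh_quad hH, zh_quad_one hH, ← hU, Finset.mul_sum] at h1
  have hne : star U *ᵥ φ y ≠ 0 := by
    intro h0
    have : U *ᵥ (star U *ᵥ φ y) = 0 := by rw [h0, mulVec_zero]
    rw [mulVec_mulVec, hU, Unitary.mul_star_self_of_mem hH.eigenvectorUnitary.2, one_mulVec] at this
    exact hy0 (hφ (by rw [this, map_zero]))
  obtain ⟨k, hk⟩ := Function.ne_iff.mp hne
  refine absurd h1 (not_le.mpr ?_)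
  refine Finset.sum_lt_sum (fun i _ => ?_) ⟨k, Finset.mem_univ _, ?_⟩
  · by_cases hi : c ≤ hH.eigenvalues i
    · simp [hz i hi]
    · exact mul_le_mul_of_nonneg_right (not_le.mp hi).le (by positivity)
  · have : ¬ c ≤ hH.eigenvalues k := fun hi => hk (hz k hi)
    refine mul_lt_mul_of_pos_right (not_le.mp this) ?_
    have := norm_pos_iff.mpr hk
    positivity

lemma zh_minimax_upper {H : Matrix n n ℂ} (hH : H.IsHermitian) {j : ℕ}
    (hj : j < Fintype.card n) (c₀ : ℝ) (hc : c₀ ≤ eigDesc H j) :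
    ∃ (W : Submodule ℂ (n → ℂ)), j < Module.finrank ℂ W ∧
      ∀ (f : ℝ → ℝ) (c : ℝ), (∀ t, c₀ ≤ t → c ≤ f t) → ∀ x ∈ W,
        c * (star x ⬝ᵥ x).re ≤ (star x ⬝ᵥ (hH.cfc f) *ᵥ x).re := by
  rw [zh_le_eigDesc_iff hH hj] at hc
  set U : Matrix n n ℂ := hH.eigenvectorUnitary.1 with hU
  let ι : ({i // c₀ ≤ hH.eigenvalues i} → ℂ) →ₗ[ℂ] (n → ℂ) :=
    Function.ExtendByZero.linearMap ℂ Subtype.val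
  have hι : Function.Injective ι := by
    intro a b hab
    ext i
    have h1 : Function.extend Subtype.val a 0 i.1 = Function.extend Subtype.val b 0 i.1 :=
      congrFun hab i.1
    simpa only [Subtype.val_injective.extend_apply] using h1
  have hUi : Function.Injective U.mulVecLin := by
    refine Function.LeftInverse.injective (g := (star U).mulVecLin) fun x => ?_
    simp only [mulVecLin_apply, mulVec_mulVec]
    rw [hU, Unitary.star_mul_self_of_mem hH.eigenvectorUnitary.2, one_mulVec]
  refine ⟨LinearMap.range (U.mulVecLin ∘ₗ ι), ?_, ?_⟩
  · rw [LinearMap.finrank_range_of_inj (by rw [LinearMap.coe_comp]; exact hUi.comp hι), Module.finrank_fintype_fun_eq_card]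
    exact hc
  · rintro f c hfc x ⟨y, rfl⟩
    rw [zh_quad_cfc hH, zh_quad_one hH, ← hU, Finset.mul_sum]
    refine Finset.sum_le_sum fun i _ => ?_
    have e : star U *ᵥ ((U.mulVecLin ∘ₗ ι) y) = ι y := by
      simp only [LinearMap.comp_apply, mulVecLin_apply, mulVec_mulVec]
      rw [hU, Unitary.star_mul_self_of_mem hH.eigenvectorUnitary.2, one_mulVec]
    rw [e]
    by_cases hi : c₀ ≤ hH.eigenvalues i
    · exact mul_le_mul_of_nonneg_right (hfc _ hi) (by positivity)
    · have : ι y i = 0 := by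
        exact Function.extend_apply' _ _ _ (by rintro ⟨a, rfl⟩; exact hi a.2)
      simp [this]
end Eig

section Tao
open Matrix
variable {n : Type*} [Fintype n] [DecidableEq n]

/-- real inner product -/
noncomputable def zhip (a b : n → ℂ) : ℝ := (star a ⬝ᵥ b).re

lemma zhip_add_left (a b c : n → ℂ) : zhip (a + b) c = zhip a c + zhip b c := by
  simp [zhip, add_dotProduct]
lemma zhip_add_right (a b c : n → ℂ) : zhip a (b + c) = zhip a b + zhip a c := by
  simp [zhip, dotProduct_add]
lemma zhip_sub_left (a b c : n → ℂ) : zhip (a - b) c = zhip a c - zhip b c := by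
  simp [zhip, sub_dotProduct]
lemma zhip_sub_right (a b c : n → ℂ) : zhip a (b - c) = zhip a b - zhip a c := by
  simp [zhip, dotProduct_sub]
lemma zhip_smul_left (t : ℝ) (a b : n → ℂ) : zhip (t • a) b = t * zhip a b := by
  simp [zhip, smul_dotProduct]
lemma zhip_smul_right (t : ℝ) (a b : n → ℂ) : zhip a (t • b) = t * zhip a b := by
  simp [zhip, dotProduct_smul]
lemma zhip_comm (a b : n → ℂ) : zhip a b = zhip b a := by
  unfold zhip
  rw [← Complex.conj_re (star b ⬝ᵥ a)]
  congr 1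
  have := star_dotProduct b a
  rw [← Complex.star_def, this, star_star]
lemma zhip_nonneg (a : n → ℂ) : 0 ≤ zhip a a := by
  have := dotProduct_star_self_nonneg a
  exact (Complex.le_def.mp this).1
lemma zhip_eq_zero {a : n → ℂ} (h : zhip a a ≤ 0) : a = 0 := by
  have h1 : 0 ≤ star a ⬝ᵥ a := dotProduct_star_self_nonneg a
  have h2 := Complex.le_def.mp h1
  have h3 : star a ⬝ᵥ a = 0 := by
    apply Complex.ext
    · exact le_antisymm h h2.1
    · exact h2.2.symm
  exact dotProduct_star_self_eq_zero.mp h3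
lemma zhip_mulVec (M : Matrix n n ℂ) (a b : n → ℂ) : zhip a (M *ᵥ b) = zhip (Mᴴ *ᵥ a) b := by
  unfold zhip
  rw [star_mulVec, conjTranspose_conjTranspose, dotProduct_mulVec]

lemma zh_eigDesc_nonneg {H : Matrix n n ℂ} (hH : H.PosSemidef) {j : ℕ}
    (hj : j < Fintype.card n) : 0 ≤ eigDesc H j := by
  rw [zh_le_eigDesc_iff hH.1 hj]
  have : Fintype.card {i // 0 ≤ hH.1.eigenvalues i} = Fintype.card n := by
    refine Fintype.card_congr (Equiv.subtypeUnivEquiv fun i => hH.eigenvalues_nonneg i)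
  omega

lemma zh_tao_aux {X Y R : Matrix n n ℂ} (hX : X.IsHermitian) (hY : Y.IsHermitian)
    (hR : R.IsHermitian) {σ : ℝ} (hpos : 0 < σ) {z w v : n → ℂ}
    (e : z = (R * X) *ᵥ w + (R * Y) *ᵥ v) (k1 : 4 * σ * zhip v v ≤ zhip z z)
    (e1 : zhip w w ≤ zhip v v) :
    2 * σ * zhip z z ≤ zhip z ((R * (X * X + Y * Y) * R) *ᵥ z) := by
  have eG : zhip z ((R * (X * X + Y * Y) * R) *ᵥ z) =
      zhip ((X * R) *ᵥ z) ((X * R) *ᵥ z) + zhip ((Y * R) *ᵥ z) ((Y * R) *ᵥ z) := by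
    have h : ∀ Z : Matrix n n ℂ, zhip (Z *ᵥ z) (Z *ᵥ z) = zhip z ((Zᴴ * Z) *ᵥ z) := by
      intro Z
      rw [← mulVec_mulVec, zhip_mulVec Zᴴ, conjTranspose_conjTranspose]
    rw [h, h, ← zhip_add_right, ← add_mulVec]
    simp only [conjTranspose_mul, hX.eq, hY.eq, hR.eq, mul_add, add_mul, mul_assoc]
  have ez : zhip z z = zhip ((X * R) *ᵥ z) w + zhip ((Y * R) *ᵥ z) v := by
    have h : zhip z z = zhip z ((R * X) *ᵥ w + (R * Y) *ᵥ v) := congrArg (zhip z) e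
    rw [h, zhip_add_right, zhip_mulVec (R * X) z w, zhip_mulVec (R * Y) z v]
    simp only [conjTranspose_mul, hX.eq, hY.eq, hR.eq]
  have q1 := zhip_nonneg ((X * R) *ᵥ z - (2 * σ) • w)
  have q2 := zhip_nonneg ((Y * R) *ᵥ z - (2 * σ) • v)
  simp only [zhip_sub_left, zhip_sub_right, zhip_smul_left, zhip_smul_right] at q1 q2
  rw [zhip_comm w] at q1
  rw [zhip_comm v] at q2
  rw [eG]
  have q3 : 4 * σ ^ 2 * (zhip w w + zhip v v) ≤ 2 * σ * zhip z z := by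
    have : 2 * σ * (4 * σ * zhip v v) ≤ 2 * σ * zhip z z :=
      mul_le_mul_of_nonneg_left k1 (by positivity)
    have h4 : 4 * σ ^ 2 * zhip w w ≤ 4 * σ ^ 2 * zhip v v :=
      mul_le_mul_of_nonneg_left e1 (by positivity)
    nlinarith
  have q4 : 4 * σ * zhip z z = 4 * σ * zhip ((X * R) *ᵥ z) w + 4 * σ * zhip ((Y * R) *ᵥ z) v := by
    rw [ez]; ring
  nlinarith

lemma zh_tao {X Y D R : Matrix n n ℂ} (hX : X.IsHermitian) (hY : Y.IsHermitian)
    (hR : R.IsHermitian) (hD : R * R = D) {j : ℕ} (hj : j < Fintype.card n) :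
    2 * svalDesc (X * D * Y) j ≤ eigDesc (R * (X * X + Y * Y) * R) j := by
  have hG : (R * (X * X + Y * Y) * R).PosSemidef := by
    have e : R * (X * X + Y * Y) * R = (X * R)ᴴ * (X * R) + (Y * R)ᴴ * (Y * R) := by
      simp only [conjTranspose_mul, hX.eq, hY.eq, hR.eq, mul_add, add_mul, mul_assoc]
    rw [e]
    exact (posSemidef_conjTranspose_mul_self _).add (posSemidef_conjTranspose_mul_self _)
  set K := X * D * Y with hK
  set σ := svalDesc K j with hσ
  rcases le_or_gt σ 0 with h0 | hpos
  · exact (by linarith : 2 * σ ≤ 0).trans (zh_eigDesc_nonneg hG hj)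
  have hM : (Kᴴ * K).IsHermitian := isHermitian_conjTranspose_mul_self K
  have hsq : σ ^ 2 ≤ eigDesc (Kᴴ * K) j := by
    rw [hσ, svalDesc, Real.sq_sqrt]
    exact (Real.sqrt_pos.mp hpos).le
  obtain ⟨W, hW, hWf⟩ := zh_minimax_upper hM hj _ hsq
  set N := hM.cfc (fun x => (√x)⁻¹) with hN
  have hNH : Nᴴ = N := by
    rw [hN, ← hM.cfc_eq]
    exact (cfc_predicate _ _ : IsSelfAdjoint (cfc (fun x : ℝ => (√x)⁻¹) (Kᴴ * K)))
  have hfin : ∀ f : ℝ → ℝ, ContinuousOn f (spectrum ℝ (Kᴴ * K)) := fun f =>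
    (Matrix.finite_real_spectrum).continuousOn f
  have eid : Kᴴ * K = cfc (fun x : ℝ => x) (Kᴴ * K) := (cfc_id' ℝ _ hM.isSelfAdjoint).symm
  have hNM : N * (Kᴴ * K) = hM.cfc (fun x => (√x)⁻¹ * x) := by
    rw [hN, ← hM.cfc_eq, ← hM.cfc_eq, cfc_mul _ _ _ (hfin _) (hfin _), ← eid]
  have hNMN : N * (Kᴴ * K) * N = hM.cfc (fun x => (√x)⁻¹ * x * (√x)⁻¹) := by
    rw [hNM, hN, ← hM.cfc_eq, ← hM.cfc_eq, ← hM.cfc_eq, ← cfc_mul _ _ _ (hfin _) (hfin _)]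
  -- the two estimates
  have est1 : ∀ v, zhip ((K * N) *ᵥ v) ((K * N) *ᵥ v) ≤ zhip v v := by
    intro v
    have e : zhip ((K * N) *ᵥ v) ((K * N) *ᵥ v) = zhip v ((N * (Kᴴ * K) * N) *ᵥ v) := by
      rw [zhip_mulVec, zhip_comm, mulVec_mulVec, conjTranspose_mul, hNH]
      simp only [mul_assoc]
    rw [e, hNMN]
    unfold zhip
    rw [zh_quad_cfc hM, zh_quad_one hM]
    refine Finset.sum_le_sum fun i _ => ?_
    refine mul_le_of_le_one_left (by positivity) ?_
    rcases le_or_gt (hM.eigenvalues i) 0 with h | h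
    · simp [Real.sqrt_eq_zero_of_nonpos h]
    · have hs := Real.sqrt_pos.mpr h
      have := Real.mul_self_sqrt h.le
      apply le_of_eq
      field_simp
      nlinarith
  have est2 : ∀ v ∈ W, σ * zhip v v ≤ zhip ((K * N) *ᵥ v) (K *ᵥ v) := by
    intro v hv
    have e : zhip ((K * N) *ᵥ v) (K *ᵥ v) = zhip v ((N * (Kᴴ * K)) *ᵥ v) := by
      rw [zhip_comm, zhip_mulVec, zhip_comm, mulVec_mulVec, conjTranspose_mul, hNH] 
      simp only [mul_assoc]
    rw [e, hNM]
    refine hWf _ _ (fun t ht => ?_) v hv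
    have ht0 : 0 < t := lt_of_lt_of_le (by positivity) ht
    have hs := Real.sqrt_pos.mpr ht0
    have h3 : (√t)⁻¹ * t = √t := by
      have := Real.mul_self_sqrt ht0.le
      field_simp
      nlinarith
    rw [h3]
    exact Real.le_sqrt_of_sq_le ht
  have key1 : ∀ v ∈ W, 4 * σ * zhip v v ≤
      zhip ((R * (X * (K * N) + Y)) *ᵥ v) ((R * (X * (K * N) + Y)) *ᵥ v) := by
    intro v hv
    set w := (K * N) *ᵥ v with hw
    have e : (R * (X * (K * N) + Y)) *ᵥ v = (R * X) *ᵥ w + (R * Y) *ᵥ v := by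
      rw [hw, mulVec_mulVec, ← add_mulVec]; simp only [mul_add, mul_assoc]
    have e2 : zhip ((R * X) *ᵥ w) ((R * Y) *ᵥ v) = zhip w (K *ᵥ v) := by
      rw [zhip_comm, zhip_mulVec, zhip_comm, mulVec_mulVec, conjTranspose_mul, hR.eq, hX.eq, hK,
        ← hD]
      simp only [mul_assoc]
    have h1 := zhip_nonneg ((R * X) *ᵥ w - (R * Y) *ᵥ v)
    have h2 := est2 v hv
    rw [← hw, ← e2] at h2
    rw [e]
    simp only [zhip_add_left, zhip_add_right, zhip_sub_left, zhip_sub_right] at h1 ⊢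
    have := zhip_comm ((R * X) *ᵥ w) ((R * Y) *ᵥ v)
    linarith
  refine zh_minimax_lower hG.1 hj _ hW ((R * (X * (K * N) + Y)).mulVecLin ∘ₗ W.subtype) ?_ ?_
  · rw [injective_iff_map_eq_zero]
    intro v hv
    have h1 := key1 v.1 v.2
    have hv' : (R * (X * (K * N) + Y)) *ᵥ v.1 = 0 := hv
    rw [hv'] at h1
    have h2 : zhip (0 : n → ℂ) 0 = 0 := by simp [zhip]
    rw [h2] at h1
    have h3 : zhip v.1 v.1 ≤ 0 := by
      by_contra hc
      have := mul_pos (mul_pos four_pos hpos) (not_le.mp hc)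
      linarith
    exact Subtype.ext (zhip_eq_zero h3)
  · rintro ⟨v, hv⟩
    simp only [LinearMap.comp_apply, Submodule.subtype_apply, mulVecLin_apply]
    have k1 := key1 v hv
    have e1 := est1 v
    have ez : (R * (X * (K * N) + Y)) *ᵥ v = (R * X) *ᵥ ((K * N) *ᵥ v) + (R * Y) *ᵥ v := by
      rw [mulVec_mulVec, ← add_mulVec]; simp only [mul_add, mul_assoc]
    exact zh_tao_aux hX hY hR hpos ez k1 e1

lemma zh_last {T G : Matrix n n ℂ} (hG : G.IsHermitian)
    (hTG : (T - (2⁻¹ : ℝ) • G).PosSemidef) {j : ℕ} (hj : j < Fintype.card n)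
    {σ : ℝ} (hσ : 0 ≤ σ) (h : 2 * σ ≤ eigDesc G j) : σ ≤ svalDesc T j := by
  obtain ⟨W, hW, hWf⟩ := zh_minimax_upper hG hj _ h
  refine Real.le_sqrt_of_sq_le ?_
  refine zh_minimax_lower (isHermitian_conjTranspose_mul_self T) hj _ hW W.subtype
    W.subtype_injective ?_
  rintro ⟨x, hx⟩
  simp only [Submodule.subtype_apply]
  change σ ^ 2 * zhip x x ≤ zhip x ((Tᴴ * T) *ᵥ x)
  have h1 : 2 * σ * zhip x x ≤ zhip x (G *ᵥ x) := by
    have := hWf id (2 * σ) (fun t ht => ht) x hx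
    rwa [← hG.cfc_eq, cfc_id ℝ G hG.isSelfAdjoint] at this
  have h2 : 0 ≤ zhip x ((T - (2⁻¹ : ℝ) • G) *ᵥ x) :=
    (Complex.le_def.mp (hTG.dotProduct_mulVec_nonneg x)).1
  rw [sub_mulVec, zhip_sub_right, smul_mulVec, zhip_smul_right] at h2
  have h3 := zhip_nonneg (T *ᵥ x - σ • x)
  simp only [zhip_sub_left, zhip_sub_right, zhip_smul_left, zhip_smul_right] at h3
  rw [zhip_comm (T *ᵥ x) x] at h3
  have h4 : zhip x ((Tᴴ * T) *ᵥ x) = zhip (T *ᵥ x) (T *ᵥ x) := by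
    rw [← mulVec_mulVec, zhip_mulVec, conjTranspose_conjTranspose]
  rw [h4]
  have h5 : σ * (σ * zhip x x) ≤ σ * zhip x (T *ᵥ x) :=
    mul_le_mul_of_nonneg_left (by linarith) hσ
  nlinarith
end Tao

section Final
open scoped NNReal
section
variable {A : Type*} [CStarAlgebra A] [PartialOrder A] [StarOrderedRing A]

lemma zh_rpow_add {a : A} (ha : 0 ≤ a) {x y : ℝ} (hx : 0 ≤ x) (hy : 0 ≤ y) :
    a ^ x * a ^ y = a ^ (x + y) := by
  rw [CFC.rpow_eq_cfc_real ha, CFC.rpow_eq_cfc_real ha, CFC.rpow_eq_cfc_real ha,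
    ← cfc_mul _ _ a (Real.continuous_rpow_const hx).continuousOn
      (Real.continuous_rpow_const hy).continuousOn]
  refine cfc_congr fun t ht => ?_
  exact (Real.rpow_add_of_nonneg (spectrum_nonneg_of_nonneg ha ht) hx hy).symm

lemma zh_op_ineq' {u : ℝ} (h0 : 0 ≤ u) (h1 : u ≤ 1 / 2) {a b : A} (ha : 0 ≤ a) (hb : 0 ≤ b) :
    (2⁻¹ : ℝ) • (CFC.sqrt (a ^ (1 - u) + b ^ (1 - u)) * (a ^ u + b ^ u) *
      CFC.sqrt (a ^ (1 - u) + b ^ (1 - u))) ≤ a + b := by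
  have hu : 0 < 1 - u := by linarith
  have hr0 : 0 ≤ u / (1 - u) := div_nonneg h0 hu.le
  have hr1 : u / (1 - u) ≤ 1 := by rw [div_le_one hu]; linarith
  have key := zh_op_ineq hr0 hr1 (a := a ^ (1 - u)) (b := b ^ (1 - u))
    CFC.rpow_nonneg CFC.rpow_nonneg
  have e1 : (1 - u) * (u / (1 - u)) = u := by field_simp
  have e2 : (1 - u) * (1 + u / (1 - u)) = 1 := by field_simp; ring
  rw [CFC.rpow_rpow_of_exponent_nonneg a _ _ hu.le hr0 ha,
    CFC.rpow_rpow_of_exponent_nonneg b _ _ hu.le hr0 hb,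
    CFC.rpow_rpow_of_exponent_nonneg a _ _ hu.le (by linarith) ha,
    CFC.rpow_rpow_of_exponent_nonneg b _ _ hu.le (by linarith) hb, e1, e2,
    CFC.rpow_one a ha, CFC.rpow_one b hb] at key
  exact key
end

open scoped MatrixOrder Matrix.Norms.L2Operator
open Matrix
variable {n : Type} [Fintype n] [DecidableEq n]

lemma zh_rpow_eq {A : Matrix n n ℂ} (hA : A.PosSemidef) (s : ℝ) : hA.1.rpow s = A ^ s := by
  rw [CFC.rpow_eq_cfc_real hA.nonneg, hA.1.cfc_eq]; rfl

lemma zh_half {A B : Matrix n n ℂ} (hA : A.PosSemidef) (hB : B.PosSemidef) (s : ℝ)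
    (hs0 : 0 ≤ s) (hs1 : s ≤ 1 / 2) {j : ℕ} (hj : j < Fintype.card n) :
    svalDesc (A ^ s * B ^ (1 - s) + A ^ (1 - s) * B ^ s) j ≤ svalDesc (A + B) j := by
  have ha := hA.nonneg
  have hb := hB.nonneg
  have nn : ∀ (M : Matrix n n ℂ) (x : ℝ), 0 ≤ M ^ x := fun M x => CFC.rpow_nonneg
  have her : ∀ {M : Matrix n n ℂ}, 0 ≤ M → M.IsHermitian := fun h => (Matrix.nonneg_iff_posSemidef.mp h).1
  have sq : ∀ {M : Matrix n n ℂ}, 0 ≤ M → CFC.sqrt M * CFC.sqrt M = M :=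
    fun h => CFC.sqrt_mul_sqrt_self _ h
  have sqh : ∀ (M : Matrix n n ℂ), (CFC.sqrt M).IsHermitian := fun M => her (CFC.sqrt_nonneg M)
  have main : ∀ u : ℝ, 0 ≤ u → u ≤ 1 / 2 →
      2 * svalDesc (A ^ s * B ^ (1 - s) + A ^ (1 - s) * B ^ s) j ≤
        eigDesc (CFC.sqrt (A ^ (1 - u) + B ^ (1 - u)) * (A ^ u + B ^ u) *
          CFC.sqrt (A ^ (1 - u) + B ^ (1 - u))) j →
      svalDesc (A ^ s * B ^ (1 - s) + A ^ (1 - s) * B ^ s) j ≤ svalDesc (A + B) j := by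
    intro u h0 h1 h
    have hop := zh_op_ineq' h0 h1 ha hb
    refine zh_last ?_ (Matrix.le_iff.mp hop) hj (Real.sqrt_nonneg _) h
    have hD : (A ^ u + B ^ u).IsHermitian := her (add_nonneg (nn _ _) (nn _ _))
    have hS := sqh (A ^ (1 - u) + B ^ (1 - u))
    unfold Matrix.IsHermitian
    simp only [conjTranspose_mul, hD.eq, hS.eq, mul_assoc]
  have hs' : A ^ s * A ^ s = A ^ (2 * s) := by rw [zh_rpow_add ha hs0 hs0]; ring_nf
  have hs'' : B ^ s * B ^ s = B ^ (2 * s) := by rw [zh_rpow_add hb hs0 hs0]; ring_nf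
  have hK : A ^ s * (A ^ (1 - 2 * s) + B ^ (1 - 2 * s)) * B ^ s =
      A ^ s * B ^ (1 - s) + A ^ (1 - s) * B ^ s := by
    rw [mul_add, add_mul, mul_assoc (A ^ s) (B ^ _), zh_rpow_add ha hs0 (by linarith),
      zh_rpow_add hb (by linarith) hs0, add_comm]
    ring_nf
  have hS0 : 0 ≤ A ^ (1 - 2 * s) + B ^ (1 - 2 * s) := add_nonneg (nn _ _) (nn _ _)
  have hD0 : 0 ≤ A ^ (2 * s) + B ^ (2 * s) := add_nonneg (nn _ _) (nn _ _)
  have tao := zh_tao (her (nn A s)) (her (nn B s)) (sqh _) (sq hS0) hj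
  rw [hs', hs'', hK] at tao
  rcases le_total s (1 / 4) with h4 | h4
  · exact main (2 * s) (by linarith) (by linarith) tao
  · refine main (1 - 2 * s) (by linarith) (by linarith) ?_
    rw [show 1 - (1 - 2 * s) = 2 * s by ring]
    refine tao.trans (le_of_eq ?_)
    set S := A ^ (1 - 2 * s) + B ^ (1 - 2 * s)
    set D := A ^ (2 * s) + B ^ (2 * s)
    have e : (CFC.sqrt S * D * CFC.sqrt S).charpoly = (CFC.sqrt D * S * CFC.sqrt D).charpoly := by
      calc _ = ((CFC.sqrt S * CFC.sqrt D) * (CFC.sqrt D * CFC.sqrt S)).charpoly := by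
            rw [mul_assoc, mul_assoc, ← mul_assoc (CFC.sqrt D) (CFC.sqrt D), sq hD0]
        _ = ((CFC.sqrt D * CFC.sqrt S) * (CFC.sqrt S * CFC.sqrt D)).charpoly :=
            Matrix.charpoly_mul_comm _ _
        _ = _ := by
            rw [mul_assoc, mul_assoc, ← mul_assoc (CFC.sqrt S) (CFC.sqrt S), sq hS0]
    unfold eigDesc
    rw [e]

lemma zh_main {A B : Matrix n n ℂ}
    (hA : A.PosSemidef) (hB : B.PosSemidef) (s : ℝ) (hs0 : 0 ≤ s) (hs1 : s ≤ 1)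
    (j : ℕ) (hj : j < Fintype.card n) :
    svalDesc (hA.1.rpow s * hB.1.rpow (1 - s) + hA.1.rpow (1 - s) * hB.1.rpow s) j
      ≤ svalDesc (A + B) j := by
  rw [zh_rpow_eq hA s, zh_rpow_eq hA (1 - s), zh_rpow_eq hB s, zh_rpow_eq hB (1 - s)]
  rcases le_total s (1 / 2) with h | h
  · exact zh_half hA hB s hs0 h hj
  · have := zh_half hA hB (1 - s) (by linarith) (by linarith) hj
    rwa [show 1 - (1 - s) = s by ring, add_comm] at this
end Final

/-- Zhan's conjecture: singular value inequality for Heinz means. -/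
theorem zhan_singular_value_heinz {n : ℕ} {A B : Matrix (Fin n) (Fin n) ℂ}
    (hA : A.PosSemidef) (hB : B.PosSemidef) (s : ℝ) (hs0 : 0 ≤ s) (hs1 : s ≤ 1)
    (j : ℕ) (hj : j < n) :
    svalDesc (hA.1.rpow s * hB.1.rpow (1 - s) + hA.1.rpow (1 - s) * hB.1.rpow s) j
      ≤ svalDesc (A + B) j := by
  exact zh_main hA hB s hs0 hs1 j (by simpa using hj)
end

section
/- For positive semidefinite matrices A, B and any real r with 0 ≤ r ≤ 1, and every index j, λ_j(A^{r+1} + B^{r+1}) ≥ (1/2) λ_j((A+B)(A^r + B^r)). -/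
open scoped ComplexOrder Matrix

open Set Real MeasureTheory in
theorem my_convexOn_integrand {A : Type*} [CStarAlgebra A] [PartialOrder A] [StarOrderedRing A]
    {p t : ℝ} (ht : 0 < t) :
    ConvexOn ℝ (Ici (0 : A)) (cfc (rpowIntegrand₁₂ p t)) := by
  have h₁ : (Ici (0 : A)).EqOn (cfc (rpowIntegrand₁₂ p t))
      (fun x : A =>
        t ^ (p - 2) • x - algebraMap ℝ A (t ^ (p - 1))
          + t ^ p • Ring.inverse (algebraMap ℝ A t + x)) := by
    intro x hx
    have hx0 : (0 : A) ≤ x := hx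
    have hg : ContinuousOn (fun z : ℝ => (t + z)⁻¹) (spectrum ℝ x) := by
      fun_prop (disch := grind -abstractProof)
    have hspectrum :  ∀ r ∈ spectrum ℝ x, t + r ≠ 0 := by grind
    have e : cfc (rpowIntegrand₁₂ p t) x =
        cfc (fun z : ℝ => (t ^ (p - 2) * z - t ^ (p - 1)) + t ^ p * (t + z)⁻¹) x := by
      apply cfc_congr
      intro z hz
      have hz0 : 0 ≤ z := spectrum_nonneg_of_nonneg hx0 hz
      have h1 : t ^ (p - 1) = t ^ (p - 2) * t := by
        rw [← Real.rpow_add_one ht.ne']; congr 1; ring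
      have h2 : t ^ p = t ^ (p - 2) * t * t := by
        rw [← Real.rpow_add_one ht.ne', ← Real.rpow_add_one ht.ne']; congr 1; ring
      have h3 : t + z ≠ 0 := by positivity
      simp only [rpowIntegrand₁₂, h1, h2]
      field_simp
      ring
    have c1 : ContinuousOn (fun z : ℝ => t ^ (p - 2) * z) (spectrum ℝ x) :=
      (continuous_const.mul continuous_id).continuousOn
    have c2 : ContinuousOn (fun _ : ℝ => t ^ (p - 1)) (spectrum ℝ x) := continuousOn_const
    have c3 : ContinuousOn (fun z : ℝ => t ^ p * (t + z)⁻¹) (spectrum ℝ x) :=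
      continuousOn_const.mul hg
    have c4 : ContinuousOn (fun z : ℝ => t + z) (spectrum ℝ x) :=
      (continuous_const.add continuous_id).continuousOn
    have c5 : ContinuousOn (fun z : ℝ => z) (spectrum ℝ x) := continuousOn_id
    have c6 : ContinuousOn (fun z : ℝ => t ^ (p - 2) * z - t ^ (p - 1)) (spectrum ℝ x) := c1.sub c2
    have hsa : IsSelfAdjoint x := hx0.isSelfAdjoint
    rw [e, cfc_add x _ _ c6 c3, cfc_sub _ _ x c1 c2, cfc_const _ x hsa,
      cfc_const_mul _ _ x c5, cfc_const_mul _ _ x hg, cfc_inv _ x hspectrum c4 hsa,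
      cfc_const_add t _ x c5 hsa, cfc_id' ℝ x hsa]
  refine ConvexOn.congr ?_ h₁.symm
  refine ConvexOn.add (ConvexOn.sub ?_ (concaveOn_const _ (convex_Ici 0))) ?_
  · exact ConvexOn.smul (by positivity) (convexOn_id (convex_Ici 0))
  · exact ConvexOn.smul (by positivity) <| CStarAlgebra.convexOn_ringInverse_algebraMap_add ht

open Set Real MeasureTheory in
theorem my_convexOn_rpow {A : Type*} [CStarAlgebra A] [PartialOrder A] [StarOrderedRing A]
    {p : ℝ} (hp : p ∈ Ioo 1 2) : ConvexOn ℝ (Ici (0 : A)) (fun a : A => a ^ p) := by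
  obtain ⟨q, rfl⟩ : ∃ q : NNReal, (q : ℝ) = p := ⟨⟨p, by linarith [hp.1]⟩, rfl⟩
  have hq : q ∈ Ioo 1 2 := ⟨by exact_mod_cast hp.1, by exact_mod_cast hp.2⟩
  simp_rw [← CFC.nnrpow_eq_rpow (lt_trans one_pos hq.1)]
  obtain ⟨μ, hμ⟩ := CFC.exists_measure_nnrpow_eq_integral_cfcₙ_rpowIntegrand₁₂ A hq
  have h₃' : (Ici 0).EqOn (fun a : A => a ^ q)
      (fun a : A => ∫ t in Ioi 0, cfcₙ (rpowIntegrand₁₂ q t) a ∂μ) :=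
    fun a ha => (hμ a ha).2
  refine ConvexOn.congr ?_ h₃'.symm
  refine integral_convexOn_of_integrand_ae (convex_Ici _) ?_ fun a ha => (hμ a ha).1
  filter_upwards [ae_restrict_mem measurableSet_Ioi] with t ht
  refine ConvexOn.congr (my_convexOn_integrand (p := q) ht) ?_
  intro a ha
  have ha0 : (0 : A) ≤ a := ha
  refine (cfcₙ_eq_cfc (f := rpowIntegrand₁₂ q t) ?_ (rpowIntegrand₁₂_zero ht)).symm
  have hs : quasispectrum ℝ a ⊆ Ici 0 := by
    intro z hz; exact quasispectrum_nonneg_of_nonneg a ha0 z hz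
  have := continuousOn_rpowIntegrand₁₂_uncurry (p := q) hp.1 _ hs
  exact this.comp (f := fun z : ℝ => (t, z)) (by fun_prop) (fun z hz => ⟨ht, hz⟩)

theorem my_rpow_add {A : Type*} [CStarAlgebra A] [PartialOrder A] [StarOrderedRing A]
    (c : A) {x y : ℝ} (hx : 0 ≤ x) (hy : 0 ≤ y) : c ^ x * c ^ y = c ^ (x + y) := by
  rw [CFC.rpow_def, CFC.rpow_def, CFC.rpow_def, ← cfc_mul _ _ c
    (NNReal.continuous_rpow_const hx).continuousOn (NNReal.continuous_rpow_const hy).continuousOn]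
  congr 1
  ext z
  simp [NNReal.rpow_add_of_nonneg z hx hy]

theorem my_key {A : Type*} [CStarAlgebra A] [PartialOrder A] [StarOrderedRing A]
    (a b : A) (ha : 0 ≤ a) (hb : 0 ≤ b) {r : ℝ} (hr0 : 0 ≤ r) (hr1 : r ≤ 1) (c : A)
    (hc : c = (1/2 : ℝ) • a + (1/2 : ℝ) • b) :
    c ^ (1/2 : ℝ) * (a ^ r + b ^ r) * c ^ (1/2 : ℝ) ≤ a ^ (r + 1) + b ^ (r + 1) := by
  have hc0 : 0 ≤ c := by rw [hc]; exact add_nonneg (smul_nonneg (by norm_num) ha) (smul_nonneg (by norm_num) hb)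
  have h1 : a ^ r + b ^ r ≤ (2 : ℝ) • c ^ r := by
    have := (CFC.concaveOn_rpow (A := A) ⟨hr0, hr1⟩).2 ha hb
      (by norm_num : (0:ℝ) ≤ 1/2) (by norm_num : (0:ℝ) ≤ 1/2) (by norm_num)
    rw [← hc] at this
    have := smul_le_smul_of_nonneg_left this (by norm_num : (0:ℝ) ≤ 2)
    simpa [smul_add, smul_smul] using this
  have h2 : (2 : ℝ) • c ^ (r + 1) ≤ a ^ (r + 1) + b ^ (r + 1) := by
    rcases hr1.eq_or_lt with h' | h'
    · have sq : ∀ d : A, 0 ≤ d → d ^ (r + 1) = d * d := by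
        intro d hd
        rw [h', ← my_rpow_add d zero_le_one zero_le_one, CFC.rpow_one d hd]
      rw [sq a ha, sq b hb, sq c hc0, ← sub_nonneg]
      have hsa : IsSelfAdjoint (a - b) := ha.isSelfAdjoint.sub hb.isSelfAdjoint
      have h5 : 0 ≤ (1/2 : ℝ) • ((a - b) * (a - b)) := smul_nonneg (by norm_num) hsa.mul_self_nonneg
      convert h5 using 1
      rw [hc]
      simp only [mul_add, add_mul, smul_mul_assoc, mul_smul_comm, sub_mul, mul_sub, smul_add,
        smul_sub, smul_smul]
      module
    have conv : ∀ p : ℝ, p = r + 1 → ConvexOn ℝ (Set.Ici (0 : A)) (fun a : A => a ^ p) := by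
      intro p hp
      rcases hr0.eq_or_lt with h | h
      · obtain rfl : p = 1 := by linarith
        exact ConvexOn.congr (convexOn_id (convex_Ici _)) (fun x hx => (CFC.rpow_one x hx).symm)
      · exact my_convexOn_rpow ⟨by linarith, by linarith⟩
    have := (conv _ rfl).2 ha hb
      (by norm_num : (0:ℝ) ≤ 1/2) (by norm_num : (0:ℝ) ≤ 1/2) (by norm_num)
    rw [← hc] at this
    have := smul_le_smul_of_nonneg_left this (by norm_num : (0:ℝ) ≤ 2)
    simpa [smul_add, smul_smul] using this
  refine le_trans ?_ h2
  have hs : IsSelfAdjoint (c ^ (1/2 : ℝ)) := (CFC.rpow_nonneg (a := c)).isSelfAdjoint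
  have := hs.conjugate_le_conjugate h1
  refine this.trans (le_of_eq ?_)
  rw [mul_smul_comm, smul_mul_assoc, my_rpow_add c (by norm_num) hr0,
    my_rpow_add c (by positivity) (by norm_num)]
  congr 2; ring

theorem my_weyl {E : Type*} [NormedAddCommGroup E] [InnerProductSpace ℂ E] [FiniteDimensional ℂ E]
    {n : ℕ} (hn : Module.finrank ℂ E = n) {T S : E →ₗ[ℂ] E} (hT : T.IsSymmetric)
    (hS : S.IsSymmetric) {c : ℝ} (hc : 0 ≤ c)
    (h : ∀ x, c * (inner ℂ x (T x)).re ≤ (inner ℂ x (S x)).re) (j : Fin n) :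
    c * hT.eigenvalues hn j ≤ hS.eigenvalues hn j := by
  have exp : ∀ {R : E →ₗ[ℂ] E} (hR : R.IsSymmetric) (x : E), (inner ℂ x (R x)).re =
      ∑ i, hR.eigenvalues hn i * ‖inner ℂ (hR.eigenvectorBasis hn i) x‖ ^ 2 := by
    intro R hR x
    rw [← (hR.eigenvectorBasis hn).sum_inner_mul_inner, Complex.re_sum]
    refine Finset.sum_congr rfl fun i _ => ?_
    have e : inner ℂ x (hR.eigenvectorBasis hn i) * inner ℂ (hR.eigenvectorBasis hn i) x
        = ((‖inner ℂ (hR.eigenvectorBasis hn i) x‖ ^ 2 : ℝ) : ℂ) := by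
      rw [← inner_conj_symm x, Complex.conj_mul']
      push_cast; rfl
    rw [← hR, hR.apply_eigenvectorBasis, inner_smul_left, mul_left_comm, e]
    simp [-Complex.ofReal_pow]
  let f : E →ₗ[ℂ] ({i : Fin n // i ≠ j} → ℂ) := LinearMap.pi fun i =>
    if j < i.1 then (innerₛₗ ℂ (hT.eigenvectorBasis hn i.1)) else
      (innerₛₗ ℂ (hS.eigenvectorBasis hn i.1))
  have hker : LinearMap.ker f ≠ ⊥ := by
    apply LinearMap.ker_ne_bot_of_finrank_lt
    have := j.pos
    simp [hn, Fintype.card_subtype_compl]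
    omega
  obtain ⟨x, hx, hx0⟩ := (Submodule.ne_bot_iff _).1 hker
  have hTx : ∀ i, j < i → inner ℂ (hT.eigenvectorBasis hn i) x = 0 := by
    intro i hi
    have := congrFun (LinearMap.mem_ker.1 hx) ⟨i, hi.ne'⟩
    simpa [f, hi] using this
  have hSx : ∀ i, i < j → inner ℂ (hS.eigenvectorBasis hn i) x = 0 := by
    intro i hi
    have := congrFun (LinearMap.mem_ker.1 hx) ⟨i, hi.ne⟩
    simpa [f, hi.not_gt] using this
  have h1 : hT.eigenvalues hn j * ‖x‖ ^ 2 ≤ (inner ℂ x (T x)).re := by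
    rw [exp hT, ← (hT.eigenvectorBasis hn).sum_sq_norm_inner_right x, Finset.mul_sum]
    refine Finset.sum_le_sum fun i _ => ?_
    rcases lt_or_ge j i with hi | hi
    · simp [hTx i hi]
    · exact mul_le_mul_of_nonneg_right (hT.eigenvalues_antitone hn hi) (by positivity)
  have h2 : (inner ℂ x (S x)).re ≤ hS.eigenvalues hn j * ‖x‖ ^ 2 := by
    rw [exp hS, ← (hS.eigenvectorBasis hn).sum_sq_norm_inner_right x, Finset.mul_sum]
    refine Finset.sum_le_sum fun i _ => ?_
    rcases lt_or_ge i j with hi | hi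
    · simp [hSx i hi]
    · exact mul_le_mul_of_nonneg_right (hS.eigenvalues_antitone hn hi) (by positivity)
  have hpos : 0 < ‖x‖ ^ 2 := by positivity
  have h3 := mul_le_mul_of_nonneg_left h1 hc
  have h4 := h x
  refine le_of_mul_le_mul_right ?_ hpos
  linarith

theorem my_eigDesc {n : ℕ} {M : Matrix (Fin n) (Fin n) ℂ} (hM : M.IsHermitian) (j : ℕ)
    (hj : j < n) : eigDesc M j = hM.eigenvalues₀ ⟨j, by simpa using hj⟩ := by
  unfold eigDesc
  have := hM.sort_roots_charpoly_eq_eigenvalues₀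
  simp only [RCLike.re_eq_complex_re] at this
  have e : (M.charpoly.roots.map Complex.re).sort (· ≥ ·) = List.ofFn hM.eigenvalues₀ := this
  rw [e, List.getD_eq_getElem _ _ (by simpa using hj), List.getElem_ofFn]

theorem my_eig_mono {n : ℕ} {M N : Matrix (Fin n) (Fin n) ℂ} (hM : M.IsHermitian)
    (hN : N.IsHermitian) {c : ℝ} (hc : 0 ≤ c) (h : (N - (c : ℂ) • M).PosSemidef) (j : ℕ)
    (hj : j < n) : c * eigDesc M j ≤ eigDesc N j := by
  rw [my_eigDesc hM j hj, my_eigDesc hN j hj]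
  refine my_weyl finrank_euclideanSpace (Matrix.isSymmetric_toEuclideanLin_iff.mpr hM)
    (Matrix.isSymmetric_toEuclideanLin_iff.mpr hN) hc ?_ _
  intro x
  have := h.re_dotProduct_nonneg (x.ofLp)
  simp only [EuclideanSpace.inner_eq_star_dotProduct, Matrix.ofLp_toLpLin, Matrix.toLin'_apply]
  rw [Matrix.sub_mulVec, Matrix.smul_mulVec, dotProduct_sub, dotProduct_smul] at this
  simp at this
  rw [dotProduct_comm, dotProduct_comm (N *ᵥ _)]
  linarith

open scoped MatrixOrder Matrix.Norms.L2Operator in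
theorem my_final {n : ℕ} {A B : Matrix (Fin n) (Fin n) ℂ}
    (hA : A.PosSemidef) (hB : B.PosSemidef) (r : ℝ) (hr0 : 0 ≤ r) (hr1 : r ≤ 1)
    (j : ℕ) (hj : j < n) :
    (1 / 2) * eigDesc ((A + B) * (A ^ r + B ^ r)) j
      ≤ eigDesc (A ^ (r + 1) + B ^ (r + 1)) j := by
  set c : Matrix (Fin n) (Fin n) ℂ := (1/2 : ℝ) • A + (1/2 : ℝ) • B with hc
  have hA0 : 0 ≤ A := hA.nonneg
  have hB0 : 0 ≤ B := hB.nonneg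
  have hc0 : 0 ≤ c := add_nonneg (smul_nonneg (by norm_num) hA0) (smul_nonneg (by norm_num) hB0)
  have key := my_key A B hA0 hB0 hr0 hr1 c hc
  set s := c ^ (1/2 : ℝ) with hs
  set X := A ^ r + B ^ r with hX
  have hs0 : 0 ≤ s := CFC.rpow_nonneg
  have hX0 : 0 ≤ X := add_nonneg CFC.rpow_nonneg CFC.rpow_nonneg
  have hss : A + B = (2 : ℂ) • (s * s) := by
    rw [hs, my_rpow_add c (by norm_num) (by norm_num)]
    norm_num
    rw [CFC.rpow_one c hc0, hc]
    ext i k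
    simp
    ring
  have hch : ((A + B) * X).charpoly = ((2 : ℂ) • (s * X * s)).charpoly := by
    have e1 : (A + B) * X = s * ((2 : ℂ) • (s * X)) := by
      rw [hss, smul_mul_assoc, mul_smul_comm, mul_assoc]
    rw [e1, Matrix.charpoly_mul_comm, smul_mul_assoc]
  have hsH : s.IsHermitian := (Matrix.nonneg_iff_posSemidef.1 hs0).1
  have hH : ((2 : ℂ) • (s * X * s)).IsHermitian := by
    have h1 : (s * X * s).IsHermitian := by
      have := Matrix.isHermitian_mul_mul_conjTranspose s (Matrix.nonneg_iff_posSemidef.1 hX0).1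
      rwa [hsH.eq] at this
    unfold Matrix.IsHermitian
    rw [Matrix.conjTranspose_smul, h1.eq]
    simp
  have e : eigDesc ((A + B) * X) j = eigDesc ((2 : ℂ) • (s * X * s)) j := by
    unfold eigDesc; rw [hch]
  rw [e]
  refine my_eig_mono hH ?_ (by norm_num) ?_ j hj
  · exact (Matrix.nonneg_iff_posSemidef.1 (add_nonneg (CFC.rpow_nonneg (a := A)) (CFC.rpow_nonneg (a := B)))).1
  · rw [smul_smul]
    have := Matrix.le_iff.1 key
    simpa using this

theorem eig_rpow_sum_ge_half_eig_prod {n : ℕ} {A B : Matrix (Fin n) (Fin n) ℂ}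
    (hA : A.PosSemidef) (hB : B.PosSemidef) (r : ℝ) (hr0 : 0 ≤ r) (hr1 : r ≤ 1)
    (j : ℕ) (hj : j < n) :
    (1 / 2) * eigDesc ((A + B) * (hA.1.rpow r + hB.1.rpow r)) j
      ≤ eigDesc (hA.1.rpow (r + 1) + hB.1.rpow (r + 1)) j := by
  open scoped MatrixOrder Matrix.Norms.L2Operator in
  have hpow : ∀ {M : Matrix (Fin n) (Fin n) ℂ} (hM : M.PosSemidef) (s : ℝ), hM.1.rpow s = M ^ s := by
    intro M hM s
    rw [CFC.rpow_eq_cfc_real hM.nonneg, hM.1.cfc_eq]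
    rfl
  rw [hpow hA, hpow hB, hpow hA, hpow hB]
  exact my_final hA hB r hr0 hr1 j hj
end

section
/- If f: [0,∞) → ℝ is operator monotone, then for all PSD matrices A, B and every index j: λ_j(A f(A) + B f(B)) ≥ λ_j( ((A+B)/2) (f(A) + f(B)) ). -/
open scoped ComplexOrder Matrix

open Polynomial in
lemma om_intertwine {m n : Type*} [Fintype m] [DecidableEq m] [Fintype n] [DecidableEq n]
    (f : ℝ → ℝ) {X : Matrix m m ℂ} {Y : Matrix n n ℂ} (hX : X.IsHermitian) (hY : Y.IsHermitian)
    (K : Matrix m n ℂ) (h : X * K = K * Y) : cfc f X * K = K * cfc f Y := by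
  classical
  have hfin : (spectrum ℝ X ∪ spectrum ℝ Y).Finite :=
    (Matrix.finite_real_spectrum).union (Matrix.finite_real_spectrum)
  let p : ℝ[X] := Lagrange.interpolate hfin.toFinset id f
  have hp : ∀ x ∈ spectrum ℝ X ∪ spectrum ℝ Y, f x = p.eval x := by
    intro x hx
    have := Lagrange.eval_interpolate_at_node (s := hfin.toFinset) (v := id) f (i := x)
      (Function.injective_id.injOn) (by simpa using hx)
    exact this.symm
  have e1 : cfc f X = aeval X p := by
    rw [← cfc_polynomial p X hX]
    exact cfc_congr (fun x hx => hp x (Or.inl hx))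
  have e2 : cfc f Y = aeval Y p := by
    rw [← cfc_polynomial p Y hY]
    exact cfc_congr (fun x hx => hp x (Or.inr hx))
  rw [e1, e2]
  induction p using Polynomial.induction_on' with
  | add p q hp hq => simp only [map_add, Matrix.add_mul, Matrix.mul_add, hp, hq]
  | monomial k a =>
    have hk : X ^ k * K = K * Y ^ k := by
      induction k with
      | zero => simp
      | succ k ih => rw [pow_succ, pow_succ, Matrix.mul_assoc, h, ← Matrix.mul_assoc, ih,
          Matrix.mul_assoc]
    simp only [aeval_monomial, Algebra.algebraMap_eq_smul_one, smul_mul_assoc, one_mul,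
      Matrix.smul_mul, Matrix.mul_smul, hk]

def OMon (f : ℝ → ℝ) : Prop :=
  ∀ (k : ℕ) (X Y : Matrix (Fin k) (Fin k) ℂ) (hX : X.PosSemidef)
      (hY : Y.PosSemidef), (X - Y).PosSemidef → (hX.1.cfc f - hY.1.cfc f).PosSemidef

lemma om_herm {m : Type*} [Fintype m] [DecidableEq m] (f : ℝ → ℝ) (X : Matrix m m ℂ) :
    (cfc f X).IsHermitian := cfc_predicate f X

lemma om_mono {m : Type*} [Fintype m] [DecidableEq m] {f : ℝ → ℝ} (hf : OMon f)
    {X Y : Matrix m m ℂ} (hX : X.PosSemidef) (hY : Y.PosSemidef) (h : (X - Y).PosSemidef) :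
    (cfc f X - cfc f Y).PosSemidef := by
  let e := Fintype.equivFin m
  have key : ∀ {Z : Matrix m m ℂ} (hZ : Z.IsHermitian),
      cfc f (Z.submatrix e.symm e.symm) = (cfc f Z).submatrix e.symm e.symm := by
    intro Z hZ
    let K : Matrix (Fin (Fintype.card m)) m ℂ := (1 : Matrix m m ℂ).submatrix e.symm id
    have hK : Z.submatrix e.symm e.symm * K = K * Z := by
      simp only [K]
      rw [Matrix.submatrix_mul_equiv (e₂ := e.symm)]
      ext i j
      simp [Matrix.mul_apply, Matrix.one_apply]
    have := om_intertwine f (hZ.submatrix e.symm) hZ K hK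
    have h2 := congrArg (fun M => M.submatrix id e.symm) this
    ext i j
    have h3 := congrFun (congrFun h2 i) j
    simp [K, Matrix.mul_apply, Matrix.one_apply, Matrix.submatrix_apply] at h3
    simpa [Matrix.submatrix_apply, e.symm.injective.eq_iff] using h3
  have := hf _ _ _ (hX.submatrix e.symm) (hY.submatrix e.symm) (h.submatrix e.symm)
  rw [← Matrix.IsHermitian.cfc_eq, ← Matrix.IsHermitian.cfc_eq, key hX.1, key hY.1] at this
  exact (Matrix.posSemidef_submatrix_equiv e.symm).1 this

lemma om_iso {m n : Type*} [Fintype m] [DecidableEq m] [Fintype n] [DecidableEq n]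
    {f : ℝ → ℝ} (hf : OMon f) {X : Matrix m m ℂ} (hX : X.PosSemidef) (V : Matrix m n ℂ)
    (hV : Vᴴ * V = 1) {t : ℝ} (ht : 0 < t) :
    (cfc f ((1 + (t : ℂ) ^ 2) • (Vᴴ * X * V)) - Vᴴ * cfc f X * V).PosSemidef := by
  have ht' : (t : ℂ) ≠ 0 := by exact_mod_cast ht.ne'
  have h0 : (0 : ℂ) ≤ 1 + (t : ℂ) ^ 2 := by exact_mod_cast (by positivity : (0 : ℝ) ≤ 1 + t ^ 2)
  have h0' : (0 : ℂ) ≤ 1 + ((t : ℂ)⁻¹) ^ 2 := by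
    exact_mod_cast (by positivity : (0 : ℝ) ≤ 1 + t⁻¹ ^ 2)
  obtain ⟨P, hP⟩ : ∃ P, P = V * Vᴴ := ⟨_, rfl⟩
  obtain ⟨Q, hQ⟩ : ∃ Q, Q = 1 - P := ⟨_, rfl⟩
  have hPH : Pᴴ = P := by rw [hP]; simp
  have hQH : Qᴴ = Q := by rw [hQ]; simp [hPH]
  have hPV : P * V = V := by rw [hP, Matrix.mul_assoc, hV, Matrix.mul_one]
  have hQV : Q * V = 0 := by rw [hQ, Matrix.sub_mul, hPV]; simp
  have hPQ : P + Q = 1 := by rw [hQ]; abel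
  let Y := (1 + (t : ℂ) ^ 2) • (P * X * P) + (1 + ((t : ℂ)⁻¹) ^ 2) • (Q * X * Q)
  have hY : Y.PosSemidef := by
    have h1 := hX.mul_mul_conjTranspose_same P
    have h2 := hX.mul_mul_conjTranspose_same Q
    rw [hPH] at h1
    rw [hQH] at h2
    exact (h1.smul h0).add (h2.smul h0')
  have hYX : (Y - X).PosSemidef := by
    have h1 := hX.mul_mul_conjTranspose_same ((t : ℂ) • P - (t : ℂ)⁻¹ • Q)
    convert h1 using 1
    have hX' : X = (P + Q) * X * (P + Q) := by rw [hPQ]; simp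
    have ex : (P + Q) * X * (P + Q) = P * X * P + P * X * Q + Q * X * P + Q * X * Q := by
      noncomm_ring
    have hc : star (t : ℂ) = t := by simp
    have hc' : star ((t : ℂ)⁻¹) = (t : ℂ)⁻¹ := by simp
    rw [Matrix.conjTranspose_sub, Matrix.conjTranspose_smul, Matrix.conjTranspose_smul, hPH, hQH,
      hc, hc']
    have : Y - X = Y - (P + Q) * X * (P + Q) := by rw [hPQ]; simp
    rw [this, ex]
    simp only [Y, Matrix.sub_mul, Matrix.mul_sub, Matrix.smul_mul, Matrix.mul_smul, smul_sub]
    match_scalars <;> field_simp <;> ring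
  have hM : (Vᴴ * X * V).PosSemidef := hX.conjTranspose_mul_mul_same V
  have hYV : Y * V = V * ((1 + (t : ℂ) ^ 2) • (Vᴴ * X * V)) := by
    simp only [Y, Matrix.add_mul, Matrix.smul_mul, Matrix.mul_assoc, hPV, hQV, Matrix.mul_zero,
      smul_zero, add_zero, Matrix.mul_smul]
    rw [hP]
    simp only [Matrix.mul_assoc]
  have h1 := om_mono hf hY hX hYX
  have h2 := h1.conjTranspose_mul_mul_same V
  have h3 := om_intertwine f hY.1 (hM.smul h0).1 V hYV
  rw [Matrix.mul_sub, Matrix.sub_mul, Matrix.mul_assoc, h3, ← Matrix.mul_assoc, hV,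
    Matrix.one_mul] at h2
  exact h2

/-- dilation data -/
lemma om_dil {n : Type*} [Fintype n] [DecidableEq n] {A B : Matrix n n ℂ} (hA : A.PosSemidef)
    (hB : B.PosSemidef) (f : ℝ → ℝ) (c s : ℝ) (hcs : c ^ 2 + s ^ 2 = 1) :
    ∃ (D : Matrix (n ⊕ n) (n ⊕ n) ℂ) (V : Matrix (n ⊕ n) n ℂ), D.PosSemidef ∧ Vᴴ * V = 1 ∧
      Vᴴ * D * V = ((c : ℂ) ^ 2) • A + ((s : ℂ) ^ 2) • B ∧
      Vᴴ * cfc f D * V = ((c : ℂ) ^ 2) • cfc f A + ((s : ℂ) ^ 2) • cfc f B ∧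
      Vᴴ * (cfc f D * D) * V = ((c : ℂ) ^ 2) • (A * cfc f A) + ((s : ℂ) ^ 2) • (B * cfc f B) := by
  obtain ⟨E, hE⟩ : ∃ E : Matrix (n ⊕ n) n ℂ, E = Matrix.fromRows 1 0 := ⟨_, rfl⟩
  obtain ⟨F, hF⟩ : ∃ F : Matrix (n ⊕ n) n ℂ, F = Matrix.fromRows 0 1 := ⟨_, rfl⟩
  have hEE : Eᴴ * E = 1 := by
    rw [hE, Matrix.conjTranspose_fromRows_eq_fromCols_conjTranspose, Matrix.fromCols_mul_fromRows]
    simp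
  have hEF : Eᴴ * F = 0 := by
    rw [hE, hF, Matrix.conjTranspose_fromRows_eq_fromCols_conjTranspose,
      Matrix.fromCols_mul_fromRows]
    simp
  have hFE : Fᴴ * E = 0 := by
    rw [hE, hF, Matrix.conjTranspose_fromRows_eq_fromCols_conjTranspose,
      Matrix.fromCols_mul_fromRows]
    simp
  have hFF : Fᴴ * F = 1 := by
    rw [hF, Matrix.conjTranspose_fromRows_eq_fromCols_conjTranspose, Matrix.fromCols_mul_fromRows]
    simp
  have hcs' : (c : ℂ) ^ 2 + (s : ℂ) ^ 2 = 1 := by exact_mod_cast hcs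
  obtain ⟨D, hD⟩ : ∃ D, D = E * A * Eᴴ + F * B * Fᴴ := ⟨_, rfl⟩
  have hDP : D.PosSemidef := by
    rw [hD]
    exact (hA.mul_mul_conjTranspose_same E).add (hB.mul_mul_conjTranspose_same F)
  have hDE : D * E = E * A := by
    rw [hD, Matrix.add_mul, Matrix.mul_assoc, hEE, Matrix.mul_assoc (F * B), hFE]; simp
  have hDF : D * F = F * B := by
    rw [hD, Matrix.add_mul, Matrix.mul_assoc, hEF, Matrix.mul_assoc (F * B), hFF]; simp
  have hfE := om_intertwine f hDP.1 hA.1 E hDE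
  have hfF := om_intertwine f hDP.1 hB.1 F hDF
  have hAc := om_intertwine f hA.1 hA.1 A rfl
  have hBc := om_intertwine f hB.1 hB.1 B rfl
  obtain ⟨V, hV⟩ : ∃ V, V = (c : ℂ) • E + (s : ℂ) • F := ⟨_, rfl⟩
  have hVH : Vᴴ = (c : ℂ) • Eᴴ + (s : ℂ) • Fᴴ := by
    rw [hV]; simp
  have gen : ∀ M N : Matrix n n ℂ, Vᴴ * ((c : ℂ) • (E * M) + (s : ℂ) • (F * N)) =
      ((c : ℂ) ^ 2) • M + ((s : ℂ) ^ 2) • N := by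
    intro M N
    rw [hVH]
    simp only [Matrix.add_mul, Matrix.mul_add, Matrix.smul_mul, Matrix.mul_smul,
      ← Matrix.mul_assoc, hEE, hEF, hFE, hFF, Matrix.zero_mul, Matrix.one_mul, smul_zero]
    module
  refine ⟨D, V, hDP, ?_, ?_, ?_, ?_⟩
  · have := gen 1 1
    rw [Matrix.mul_one, Matrix.mul_one, ← hV] at this
    rw [this, ← add_smul, hcs', one_smul]
  · rw [← gen, Matrix.mul_assoc, hV, Matrix.mul_add, Matrix.mul_smul, Matrix.mul_smul, hDE, hDF]
  · rw [← gen, Matrix.mul_assoc, hV, Matrix.mul_add, Matrix.mul_smul, Matrix.mul_smul, hfE, hfF]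
  · rw [← gen, Matrix.mul_assoc]
    congr 1
    rw [hV, Matrix.mul_add, Matrix.mul_smul, Matrix.mul_smul, Matrix.mul_assoc, hDE,
      Matrix.mul_assoc, hDF, ← Matrix.mul_assoc, hfE, ← Matrix.mul_assoc, hfF, ← hAc, ← hBc,
      Matrix.mul_assoc, hAc, Matrix.mul_assoc, hBc]

lemma om_weighted {n : Type*} [Fintype n] [DecidableEq n] {f : ℝ → ℝ} (hf : OMon f)
    {A B : Matrix n n ℂ} (hA : A.PosSemidef)
    (hB : B.PosSemidef) (c s : ℝ) (hcs : c ^ 2 + s ^ 2 = 1) {t : ℝ} (ht : 0 < t) :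
    (cfc f ((1 + (t : ℂ) ^ 2) • (((c : ℂ) ^ 2) • A + ((s : ℂ) ^ 2) • B)) -
      (((c : ℂ) ^ 2) • cfc f A + ((s : ℂ) ^ 2) • cfc f B)).PosSemidef := by
  obtain ⟨D, V, hD, hV, h1, h2, -⟩ := om_dil hA hB f c s hcs
  have := om_iso hf hD V hV ht
  rwa [h1, h2] at this

lemma om_scalar {f : ℝ → ℝ} (hf : OMon f) {z s : ℝ} (hz : 0 ≤ z) (hs : 1 ≤ s) :
    f (s * z) - f 0 ≤ s * (f z - f 0) := by
  have key : ∀ t : ℝ, 0 < t → f (s * z) - f 0 ≤ s * (1 + t ^ 2) * (f z - f 0) := by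
    intro t ht
    have hpos : 0 < s * (1 + t ^ 2) := by positivity
    have hw1 : (s * (1 + t ^ 2))⁻¹ ≤ 1 := inv_le_one_of_one_le₀ (by nlinarith [sq_nonneg t])
    have hw0 : 0 ≤ (s * (1 + t ^ 2))⁻¹ := by positivity
    obtain ⟨w, hw⟩ : ∃ w, w = (s * (1 + t ^ 2))⁻¹ := ⟨_, rfl⟩
    rw [← hw] at hw1 hw0
    have hsz : 0 ≤ s * z := by positivity
    have hA : (algebraMap ℝ (Matrix (Fin 1) (Fin 1) ℂ) (s * z)).PosSemidef := by
      rw [Matrix.algebraMap_eq_diagonal, Matrix.posSemidef_diagonal_iff]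
      intro i
      simp only [Pi.algebraMap_apply, Complex.coe_algebraMap]
      exact_mod_cast hsz
    have hB : (algebraMap ℝ (Matrix (Fin 1) (Fin 1) ℂ) 0).PosSemidef := by
      rw [map_zero]; exact Matrix.PosSemidef.zero
    have h := om_weighted hf hA hB (√w) (√(1 - w))
      (by rw [Real.sq_sqrt hw0, Real.sq_sqrt (by linarith)]; ring) ht
    have e1 : ((√w : ℝ) : ℂ) ^ 2 = (w : ℂ) := by
      rw [← Complex.ofReal_pow, Real.sq_sqrt hw0]
    have e2 : ((√(1 - w) : ℝ) : ℂ) ^ 2 = ((1 - w : ℝ) : ℂ) := by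
      rw [← Complex.ofReal_pow, Real.sq_sqrt (by linarith)]
    have e3 : (1 + (t : ℂ) ^ 2) • ((w : ℂ) • (algebraMap ℝ (Matrix (Fin 1) (Fin 1) ℂ) (s * z))
        + ((1 - w : ℝ) : ℂ) • (algebraMap ℝ (Matrix (Fin 1) (Fin 1) ℂ) 0)) =
        algebraMap ℝ (Matrix (Fin 1) (Fin 1) ℂ) z := by
      have : (1 + t ^ 2) * (w * (s * z)) = z := by
        rw [hw]; field_simp
      ext i j
      simp only [Subsingleton.elim i j, Matrix.smul_apply, Matrix.add_apply,
        Matrix.algebraMap_matrix_apply, Complex.coe_algebraMap, if_true, smul_eq_mul,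
        Complex.ofReal_zero, mul_zero, add_zero]
      exact_mod_cast this
    rw [e1, e2, e3, cfc_algebraMap, cfc_algebraMap, cfc_algebraMap] at h
    have h4 := h.diag_nonneg (i := 0)
    simp [Matrix.algebraMap_matrix_apply] at h4
    have h5 : w * f (s * z) + (1 - w) * f 0 ≤ f z := by exact_mod_cast h4
    have h6 : w * (f (s * z) - f 0) ≤ f z - f 0 := by linarith
    have h7 := mul_le_mul_of_nonneg_left h6 hpos.le
    rw [← mul_assoc, hw, mul_inv_cancel₀ hpos.ne', one_mul] at h7
    exact h7
  have lim : Filter.Tendsto (fun t : ℝ => s * (1 + t ^ 2) * (f z - f 0)) (nhdsWithin 0 (Set.Ioi 0))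
      (nhds (s * (1 + 0 ^ 2) * (f z - f 0))) :=
    (Continuous.tendsto (by fun_prop) 0).mono_left nhdsWithin_le_nhds
  have := ge_of_tendsto lim (by filter_upwards [self_mem_nhdsWithin] with t ht using key t ht)
  simpa using this

lemma om_limit {n : Type*} [Fintype n] [DecidableEq n] {H G : Matrix n n ℂ} (hH : H.IsHermitian)
    (h : ∀ t : ℝ, 0 < t → (H + ((t : ℂ) ^ 2) • G).PosSemidef) : H.PosSemidef := by
  refine Matrix.PosSemidef.of_dotProduct_mulVec_nonneg hH fun x => ?_
  have key : ∀ t : ℝ, 0 < t →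
      0 ≤ star x ⬝ᵥ (H *ᵥ x) + (t : ℂ) ^ 2 * (star x ⬝ᵥ (G *ᵥ x)) := by
    intro t ht
    have := (h t ht).dotProduct_mulVec_nonneg x
    rwa [Matrix.add_mulVec, Matrix.smul_mulVec, dotProduct_add, dotProduct_smul] at this
  have lim : Filter.Tendsto
      (fun t : ℝ => star x ⬝ᵥ (H *ᵥ x) + (t : ℂ) ^ 2 * (star x ⬝ᵥ (G *ᵥ x)))
      (nhdsWithin 0 (Set.Ioi 0))
      (nhds (star x ⬝ᵥ (H *ᵥ x) + ((0 : ℝ) : ℂ) ^ 2 * (star x ⬝ᵥ (G *ᵥ x)))) :=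
    (Continuous.tendsto (by fun_prop) 0).mono_left nhdsWithin_le_nhds
  have := ge_of_tendsto lim (by filter_upwards [self_mem_nhdsWithin] with t ht using key t ht)
  simpa using this

open scoped InnerProductSpace in
lemma om_weyl_lin {E : Type*} [NormedAddCommGroup E] [InnerProductSpace ℂ E]
    [FiniteDimensional ℂ E] {n : ℕ} (hn : Module.finrank ℂ E = n) {T S : E →ₗ[ℂ] E}
    (hT : T.IsSymmetric) (hS : S.IsSymmetric)
    (h : ∀ x, (⟪x, T x⟫_ℂ).re ≤ (⟪x, S x⟫_ℂ).re) (j : Fin n) :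
    hT.eigenvalues hn j ≤ hS.eigenvalues hn j := by
  have form : ∀ {R : E →ₗ[ℂ] E} (hR : R.IsSymmetric) (x : E), (⟪x, R x⟫_ℂ).re =
      ∑ i, hR.eigenvalues hn i * ‖(hR.eigenvectorBasis hn).repr x i‖ ^ 2 := by
    intro R hR x
    rw [← (hR.eigenvectorBasis hn).repr.inner_map_map, PiLp.inner_apply, Complex.re_sum]
    refine Finset.sum_congr rfl fun i _ => ?_
    rw [hR.eigenvectorBasis_apply_self_apply hn x i]
    simp only [RCLike.inner_apply]
    rw [mul_assoc, RCLike.mul_conj]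
    norm_cast
  have nrm : ∀ {R : E →ₗ[ℂ] E} (hR : R.IsSymmetric) (x : E), ‖x‖ ^ 2 =
      ∑ i, ‖(hR.eigenvectorBasis hn).repr x i‖ ^ 2 := by
    intro R hR x
    rw [← (hR.eigenvectorBasis hn).repr.norm_map, EuclideanSpace.norm_sq_eq]
  let Φ : E →ₗ[ℂ] ({k : Fin n // k ≠ j} → ℂ) := LinearMap.pi fun k =>
    if j < k.1 then ((EuclideanSpace.proj k.1 : EuclideanSpace ℂ (Fin n) →L[ℂ] ℂ).toLinearMap ∘ₗ
        (hT.eigenvectorBasis hn).repr.toLinearEquiv.toLinearMap)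
      else ((EuclideanSpace.proj k.1 : EuclideanSpace ℂ (Fin n) →L[ℂ] ℂ).toLinearMap ∘ₗ
        (hS.eigenvectorBasis hn).repr.toLinearEquiv.toLinearMap)
  have hker : LinearMap.ker Φ ≠ ⊥ := by
    apply LinearMap.ker_ne_bot_of_finrank_lt
    rw [hn, Module.finrank_fintype_fun_eq_card]
    have := j.pos
    simp [Fintype.card_subtype_compl]
    omega
  obtain ⟨v, hv, hv0⟩ := Submodule.exists_mem_ne_zero_of_ne_bot hker
  have hΦ : ∀ k : {k : Fin n // k ≠ j}, Φ v k = 0 := fun k => by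
    rw [LinearMap.mem_ker.1 hv]; rfl
  have hTv : ∀ k, j < k → (hT.eigenvectorBasis hn).repr v k = 0 := by
    intro k hk
    have := hΦ ⟨k, hk.ne'⟩
    simpa [Φ, hk] using this
  have hSv : ∀ k, k < j → (hS.eigenvectorBasis hn).repr v k = 0 := by
    intro k hk
    have := hΦ ⟨k, hk.ne⟩
    simpa [Φ, hk.not_gt] using this
  have h1 : hT.eigenvalues hn j * ‖v‖ ^ 2 ≤ (⟪v, T v⟫_ℂ).re := by
    rw [form hT, nrm hT, Finset.mul_sum]
    refine Finset.sum_le_sum fun k _ => ?_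
    rcases lt_or_ge j k with hk | hk
    · simp [hTv k hk]
    · exact mul_le_mul_of_nonneg_right (hT.eigenvalues_antitone hn hk) (sq_nonneg _)
  have h2 : (⟪v, S v⟫_ℂ).re ≤ hS.eigenvalues hn j * ‖v‖ ^ 2 := by
    rw [form hS, nrm hS, Finset.mul_sum]
    refine Finset.sum_le_sum fun k _ => ?_
    rcases lt_or_ge k j with hk | hk
    · simp [hSv k hk]
    · exact mul_le_mul_of_nonneg_right (hS.eigenvalues_antitone hn hk) (sq_nonneg _)
  have h3 : 0 < ‖v‖ ^ 2 := by positivity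
  exact le_of_mul_le_mul_right ((h1.trans (h v)).trans h2) h3

lemma om_weyl {n : Type*} [Fintype n] [DecidableEq n] {M N : Matrix n n ℂ} (hM : M.IsHermitian)
    (hN : N.IsHermitian) (h : (N - M).PosSemidef) (j : ℕ) (hj : j < Fintype.card n) :
    eigDesc M j ≤ eigDesc N j := by
  have key : ∀ {R : Matrix n n ℂ} (hR : R.IsHermitian), eigDesc R j = hR.eigenvalues₀ ⟨j, hj⟩ := by
    intro R hR
    have := hR.sort_roots_charpoly_eq_eigenvalues₀
    unfold eigDesc
    change ((R.charpoly.roots.map Complex.re).sort (· ≥ ·)) = _ at this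
    rw [this, List.getD_eq_getElem _ _ (by simpa using hj)]
    simp
  rw [key hM, key hN]
  apply om_weyl_lin
  intro x
  have h1 := (Complex.le_def.1 (h.dotProduct_mulVec_nonneg x.ofLp)).1
  rw [Matrix.sub_mulVec, dotProduct_sub] at h1
  simp only [EuclideanSpace.inner_eq_star_dotProduct, Matrix.ofLp_toLpLin, Matrix.toLin'_apply]
  rw [dotProduct_comm _ (star _), dotProduct_comm _ (star _)]
  simpa using h1

lemma om_concave {n : Type*} [Fintype n] [DecidableEq n] {f : ℝ → ℝ} (hf : OMon f)
    {A B : Matrix n n ℂ} (hA : A.PosSemidef) (hB : B.PosSemidef) :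
    (cfc f ((2 : ℂ)⁻¹ • (A + B)) - (2 : ℂ)⁻¹ • (cfc f A + cfc f B)).PosSemidef := by
  have hh : (0 : ℂ) ≤ 2⁻¹ := by
    rw [show (2 : ℂ)⁻¹ = ((2⁻¹ : ℝ) : ℂ) by simp]; exact_mod_cast (by norm_num : (0 : ℝ) ≤ 2⁻¹)
  obtain ⟨C, hC⟩ : ∃ C, C = (2 : ℂ)⁻¹ • (A + B) := ⟨_, rfl⟩
  have hCP : C.PosSemidef := by rw [hC]; exact (hA.add hB).smul hh
  rw [← hC]
  have hHF : ((2 : ℂ)⁻¹ • (cfc f A + cfc f B)).IsHermitian := by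
    unfold Matrix.IsHermitian
    rw [Matrix.conjTranspose_smul, Matrix.conjTranspose_add, (om_herm f A).eq, (om_herm f B).eq]
    simp
  refine om_limit (G := cfc f C - (f 0 : ℂ) • 1) ((om_herm f C).sub hHF) fun t ht => ?_
  have h2 : ((√2⁻¹ : ℝ) : ℂ) ^ 2 = 2⁻¹ := by
    rw [← Complex.ofReal_pow, Real.sq_sqrt (by norm_num)]; simp
  have h1 := om_weighted hf hA hB (√2⁻¹) (√2⁻¹) (by rw [Real.sq_sqrt (by norm_num)]; norm_num) ht
  rw [h2, ← smul_add, ← smul_add, ← hC] at h1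
  -- compare
  have hsm : (1 + (t : ℂ) ^ 2) • C = (1 + t ^ 2 : ℝ) • C := by
    ext i j
    simp
  have hcomp : cfc f ((1 + (t : ℂ) ^ 2) • C) = cfc (fun x => f ((1 + t ^ 2) * x)) C := by
    rw [hsm]
    exact (cfc_comp_const_mul (1 + t ^ 2) f C
      ((Matrix.finite_real_spectrum.image _).continuousOn f) hCP.1).symm
  have h3 : ((1 + t ^ 2 : ℝ) • cfc f C - (t ^ 2 * f 0) • (1 : Matrix n n ℂ) -
      cfc f ((1 + (t : ℂ) ^ 2) • C)).PosSemidef := by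
    have hc : ∀ g : ℝ → ℝ, ContinuousOn g (spectrum ℝ C) := fun g =>
      Matrix.finite_real_spectrum.continuousOn g
    have e : (1 + t ^ 2 : ℝ) • cfc f C - (t ^ 2 * f 0) • (1 : Matrix n n ℂ) -
        cfc f ((1 + (t : ℂ) ^ 2) • C) =
        cfc (fun x => (1 + t ^ 2) * f x - t ^ 2 * f 0 - f ((1 + t ^ 2) * x)) C := by
      rw [hcomp, cfc_sub _ _ C (hc _) (hc _), cfc_sub _ _ C (hc _) (hc _),
        cfc_const_mul _ _ C (hc _), cfc_const (t ^ 2 * f 0) C hCP.1.isSelfAdjoint, Algebra.algebraMap_eq_smul_one]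
    rw [e, hCP.1.cfc_eq]
    have hpsd : (Matrix.diagonal (fun i => (((fun x => (1 + t ^ 2) * f x - t ^ 2 * f 0 -
        f ((1 + t ^ 2) * x)) (hCP.1.eigenvalues i) : ℝ) : ℂ))).PosSemidef := by
      rw [Matrix.posSemidef_diagonal_iff]
      intro i
      have := om_scalar hf (hCP.eigenvalues_nonneg i) (s := 1 + t ^ 2) (by nlinarith)
      have h' : 0 ≤ (1 + t ^ 2) * f (hCP.1.eigenvalues i) - t ^ 2 * f 0 -
        f ((1 + t ^ 2) * hCP.1.eigenvalues i) := by linarith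
      exact_mod_cast h'
    exact hpsd.mul_mul_conjTranspose_same _
  have h4 := h1.add h3
  convert h4 using 1
  have e1 : (1 + t ^ 2 : ℝ) • cfc f C = (1 + (t : ℂ) ^ 2) • cfc f C := by
    ext i j
    simp
  have e2 : (t ^ 2 * f 0) • (1 : Matrix n n ℂ) = ((t : ℂ) ^ 2 * (f 0 : ℂ)) • 1 := by
    ext i j
    simp [Matrix.one_apply]
  rw [e1, e2]
  module

lemma om_sqrt {n : Type*} [Fintype n] [DecidableEq n] {D : Matrix n n ℂ} (hD : D.PosSemidef) :
    ∃ R : Matrix n n ℂ, R.IsHermitian ∧ R * R = D := by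
  refine ⟨cfc Real.sqrt D, om_herm _ _, ?_⟩
  have hc : ∀ g : ℝ → ℝ, ContinuousOn g (spectrum ℝ D) := fun g =>
      Matrix.finite_real_spectrum.continuousOn g
  rw [← cfc_mul _ _ D (hc _) (hc _)]
  conv_rhs => rw [← cfc_id ℝ D hD.1]
  refine cfc_congr fun x hx => ?_
  rw [hD.1.spectrum_real_eq_range_eigenvalues] at hx
  obtain ⟨i, rfl⟩ := hx
  exact Real.mul_self_sqrt (hD.eigenvalues_nonneg i)

lemma om_convex {n : Type*} [Fintype n] [DecidableEq n] {f : ℝ → ℝ} (hf : OMon f)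
    {A B : Matrix n n ℂ} (hA : A.PosSemidef) (hB : B.PosSemidef) :
    ((2 : ℂ)⁻¹ • (A * cfc f A + B * cfc f B) -
      ((2 : ℂ)⁻¹ • (A + B)) * cfc f ((2 : ℂ)⁻¹ • (A + B))).PosSemidef := by
  obtain ⟨D, V, hD, hV, h1, -, h2⟩ := om_dil hA hB f (√2⁻¹) (√2⁻¹)
    (by rw [Real.sq_sqrt (by norm_num)]; norm_num)
  have h3 : ((√2⁻¹ : ℝ) : ℂ) ^ 2 = 2⁻¹ := by
    rw [← Complex.ofReal_pow, Real.sq_sqrt (by norm_num)]; simp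
  rw [h3, ← smul_add] at h1 h2
  rw [← h1, ← h2]
  obtain ⟨R, hR, hRR⟩ := om_sqrt hD
  have hDR : D * R = R * D := by rw [← hRR, Matrix.mul_assoc]
  have hfR := om_intertwine f hD.1 hD.1 R hDR
  obtain ⟨L, hL⟩ : ∃ L, L = R * V := ⟨_, rfl⟩
  have hLH : Lᴴ = Vᴴ * R := by rw [hL, Matrix.conjTranspose_mul, hR.eq]
  have hLL : Lᴴ * L = Vᴴ * D * V := by
    rw [hLH, hL, ← hRR]; simp only [Matrix.mul_assoc]
  have hPL := Matrix.posSemidef_self_mul_conjTranspose L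
  have hle : (D - L * Lᴴ).PosSemidef := by
    have hQ : ((1 - V * Vᴴ) * (1 - V * Vᴴ)ᴴ) = 1 - V * Vᴴ := by
      have : V * Vᴴ * (V * Vᴴ) = V * Vᴴ := by
        rw [Matrix.mul_assoc, ← Matrix.mul_assoc Vᴴ, hV, Matrix.one_mul]
      simp [Matrix.sub_mul, Matrix.mul_sub, this]
    have h4 := (Matrix.posSemidef_self_mul_conjTranspose (1 - V * Vᴴ))
    rw [hQ] at h4
    have h5 := h4.mul_mul_conjTranspose_same R
    rw [hR.eq, Matrix.mul_sub, Matrix.sub_mul, Matrix.mul_one, hRR] at h5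
    rw [hLH, hL]
    simpa only [Matrix.mul_assoc] using h5
  have h6 := (om_mono hf hD hPL hle).conjTranspose_mul_mul_same L
  have h7 := om_intertwine f hPL.1 (Matrix.posSemidef_conjTranspose_mul_self L).1 L
    (Matrix.mul_assoc _ _ _)
  rw [Matrix.mul_sub, Matrix.sub_mul, Matrix.mul_assoc Lᴴ (cfc f (L * Lᴴ)), h7,
    ← Matrix.mul_assoc, hLL] at h6
  convert h6 using 2
  rw [hLH, hL, ← hRR]
  rw [hRR]
  simp only [Matrix.mul_assoc]
  rw [← Matrix.mul_assoc (cfc f D) R, hfR]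
  simp only [← Matrix.mul_assoc]
  rw [Matrix.mul_assoc Vᴴ R R, hRR, Matrix.mul_assoc Vᴴ D, Matrix.mul_assoc Vᴴ (cfc f D),
    om_intertwine f hD.1 hD.1 D rfl]

/-- Corollary 1 of the paper. -/
theorem monotone_eig_ineq {n : ℕ} (f : ℝ → ℝ)
    (hf : ∀ (k : ℕ) (X Y : Matrix (Fin k) (Fin k) ℂ) (hX : X.PosSemidef)
      (hY : Y.PosSemidef), (X - Y).PosSemidef → (hX.1.cfc f - hY.1.cfc f).PosSemidef)
    {A B : Matrix (Fin n) (Fin n) ℂ} (hA : A.PosSemidef) (hB : B.PosSemidef)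
    (j : ℕ) (hj : j < n) :
    eigDesc (((2 : ℂ)⁻¹ • (A + B)) * (hA.1.cfc f + hB.1.cfc f)) j
      ≤ eigDesc (A * hA.1.cfc f + B * hB.1.cfc f) j := by

  rw [← hA.1.cfc_eq, ← hB.1.cfc_eq]
  have hh : (0 : ℂ) ≤ 2⁻¹ := by
    rw [show (2 : ℂ)⁻¹ = ((2⁻¹ : ℝ) : ℂ) by simp]; exact_mod_cast (by norm_num : (0 : ℝ) ≤ 2⁻¹)
  have h1 := om_concave hf hA hB
  have h2 := om_convex hf hA hB
  obtain ⟨C, hC⟩ : ∃ C, C = (2 : ℂ)⁻¹ • (A + B) := ⟨_, rfl⟩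
  have hCP : C.PosSemidef := by rw [hC]; exact (hA.add hB).smul hh
  rw [← hC] at h1 h2 ⊢
  obtain ⟨R, hR, hRR⟩ := om_sqrt hCP
  have hfH : (cfc f A + cfc f B).IsHermitian := (om_herm f A).add (om_herm f B)
  have hchar : eigDesc (C * (cfc f A + cfc f B)) j = eigDesc (R * (cfc f A + cfc f B) * R) j := by
    unfold eigDesc
    rw [← hRR, Matrix.mul_assoc, Matrix.charpoly_mul_comm]
  rw [hchar]
  have hAc := om_intertwine f hA.1 hA.1 A rfl
  have hBc := om_intertwine f hB.1 hB.1 B rfl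
  apply om_weyl _ _ _ j (by simpa using hj)
  · unfold Matrix.IsHermitian
    rw [Matrix.conjTranspose_mul, Matrix.conjTranspose_mul, hR.eq, hfH.eq, Matrix.mul_assoc]
  · unfold Matrix.IsHermitian
    rw [Matrix.conjTranspose_add, Matrix.conjTranspose_mul, Matrix.conjTranspose_mul,
      (om_herm f A).eq, (om_herm f B).eq, hA.1.eq, hB.1.eq, hAc, hBc]
  · have h3 := h1.conjTranspose_mul_mul_same R
    have hCR : C * R = R * C := by rw [← hRR, Matrix.mul_assoc]
    have hfR := om_intertwine f hCP.1 hCP.1 R hCR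
    rw [hR.eq, Matrix.mul_sub, Matrix.sub_mul, Matrix.mul_assoc, hfR, ← Matrix.mul_assoc, hRR] at h3
    have h4 := (h2.add h3).smul (a := (2 : ℂ)) (by norm_num)
    convert h4 using 1
    rw [Matrix.mul_smul, Matrix.smul_mul]
    module
end

section
/- For every PSD matrix A ≥ 0 and real p with 0 ≤ p ≤ 1, the map A ↦ A^p is operator monotone: if A ≥ B ≥ 0 then A^p ≥ B^p (Loewner–Heinz inequality). -/
open scoped ComplexOrder Matrix

open scoped MatrixOrder Matrix.Norms.L2Operator in
theorem loewner_heinz_aux {n : ℕ} {A B : Matrix (Fin n) (Fin n) ℂ}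
    (hA : A.PosSemidef) (hB : B.PosSemidef) (p : ℝ) (hp0 : 0 ≤ p) (hp1 : p ≤ 1)
    (hAB : (A - B).PosSemidef) :
    (cfc (fun x : ℝ => x ^ p) A - cfc (fun x : ℝ => x ^ p) B).PosSemidef := by
  have h : B ^ p ≤ A ^ p := CFC.rpow_le_rpow ⟨hp0, hp1⟩ (Matrix.le_iff.mpr hAB)
  rw [CFC.rpow_eq_cfc_real hA.nonneg, CFC.rpow_eq_cfc_real hB.nonneg] at h
  exact Matrix.le_iff.mp h

/-- Loewner–Heinz inequality. -/
theorem loewner_heinz {n : ℕ} {A B : Matrix (Fin n) (Fin n) ℂ}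
    (hA : A.PosSemidef) (hB : B.PosSemidef) (p : ℝ) (hp0 : 0 ≤ p) (hp1 : p ≤ 1)
    (hAB : (A - B).PosSemidef) :
    (hA.1.rpow p - hB.1.rpow p).PosSemidef := by
  unfold Matrix.IsHermitian.rpow
  rw [← hA.1.cfc_eq, ← hB.1.cfc_eq]
  exact loewner_heinz_aux hA hB p hp0 hp1 hAB
end
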